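/- Let F be a field and let A be a finite subset of F with |A| ≥ 2, such that if F has positive characteristic p then |A| < p^{1/4}. Then there exist absolute constants c > 0 and d ≥ 0 such that |A(A+1)| ≥ c · (log|A|)^{−d} · |A|^{11/9}. -/

import Mathlib

open Finset Pointwise

/-!
Write `B = A + 1` and `S = AB`, with `n = |A|`; the bound comes from
`n ^ 11 ≤ C (log n) ^ 2 |S| ^ 9`.

**Incidences.** `N` points and `N` planes in 3-space over an infinite field, with at most `k` of the
points on a line and dually, have `O(N ^ (3/2) + k N)` incidences as soon as the characteristic is
zero or large compared with `√N` (`card_incidences_le`). A generic projective change of coordinates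
turns points and planes into two families of lines, one line in each plane `X₂ = t` and one in each
plane `X₁ = w`, and incidences into crossings (`card_line_incidences_le`). If all lines had many
crossings, a surface `F = 0` of low degree through the smaller family would contain the other family
too (`no_rich_configuration`). Every contained line lies on the zero set of the flecnode polynomial
of `F`, so by a resultant bound (`card_common_lines_le`) an irreducible `F` contains few lines unless
it divides its flecnode polynomial. In that case `F` is ruled, and its lines of the first family are
given by collinear points, except along the singular locus (`dvd_of_ruled`, `collinear_of_dvd`).

**Energy.** Consequently the number of coincidences among the values `(x c + ε) / z`, `ε = ±1`, is
`O(N ^ (3/2))`, where `N` is the number of triples `(c, x, z)` (`card_sextuples_sq_le`).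

**Ratios.** Let `B' ⊆ B` have half the size of `B` and minimise
`E = ∑ b, b' ∈ B', #{s ∈ S | s b' / b ∈ S}`, and let `A' = {a ∈ A | a + 1 ∉ B'}`. By minimality
(`le_of_minimal`) every `a + 1` with `a ∈ A'` is correlated with `B'` at least as much as the average
element of `B'`. Together with the energy bound this shows that the numbers `r(x)` of
representations of `x` as a ratio satisfy
`∑ x, r_{A'}(x) ^ 4 ≲ (log n) n ^ 7 |S| ^ 3 / E ^ 2` (`card_level_le_left`) and
`∑ x, r_{B'}(x) ^ 4 ≲ (log n) n ^ 2 |S| ^ 2` (`card_level_le_right`).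

**Rectangles.** A positive proportion of the rectangles `(a, a', b, b')` in `A' × A' × B' × B'` have
all four products popular. The table of products of such a rectangle is a solution of
`s₁ s₄ = s₂ s₃` in `S` with `s₁`, `s₄` popular, and there are `O(|S| ^ 2 E / n ^ 2)` of those
(`card_quadruples_le`). Two rectangles with the same table have proportional sides, so the number of
such pairs is at most `∑ x, r_{A'}(x) ^ 2 r_{B'}(x) ^ 2`
(`card_rectangle_collisions_sq_le`). Applying Cauchy-Schwarz to the map from rectangles to tables,
and again to this sum, makes `E` cancel and leaves the required inequality
(`shifted_product_core`).
-/

/-! ### Lines in a surface and the flecnode polynomial -/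

open Polynomial in
/-- The restriction of a polynomial in `(X₀, X₁, X₂)` to the line `X₀ = m x + n`, `Xᵢ = x`, with the
third coordinate equal to `z`; such a line is said to be of type `i`. -/
noncomputable def lineSub {K : Type*} [Field K] (i : Fin 3) (m n z : K) :
    MvPolynomial (Fin 3) K →ₐ[K] K[X] :=
  MvPolynomial.aeval (fun j => if j = 0 then C m * X + C n else if j = i then X else C z)

section lineSub

variable {K : Type*} [Field K]

open MvPolynomial in
theorem natDegree_lineSub_le (i : Fin 3) (hi : i ≠ 0) (m n z : K) (F : MvPolynomial (Fin 3) K) :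
    (lineSub i m n z F).natDegree ≤ degreeOf i F + degreeOf 0 F := by
  rw [lineSub, aeval_def, eval₂_eq']
  refine Polynomial.natDegree_sum_le_of_forall_le _ _ ?_
  intro e he
  refine (Polynomial.natDegree_mul_le).trans ?_
  have h0 : (algebraMap K (Polynomial K) (coeff e F)).natDegree = 0 := by simp
  rw [h0, zero_add]
  refine (Polynomial.natDegree_prod_le _ _).trans ?_
  have hb : ∀ j : Fin 3, ((if j = 0 then Polynomial.C m * Polynomial.X + Polynomial.C n
      else if j = i then Polynomial.X else Polynomial.C z : Polynomial K) ^ e j).natDegree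
      ≤ (if j = 0 then e 0 else 0) + (if j = i then e i else 0) := by
    intro j
    refine (Polynomial.natDegree_pow_le).trans ?_
    split_ifs with h1 h2 h2
    · exact absurd (h2.symm.trans h1) hi
    · subst h1
      have := Polynomial.natDegree_linear_le (a := m) (b := n)
      nlinarith
    · subst h2; simp
    · simp
  refine (Finset.sum_le_sum (fun j _ => hb j)).trans ?_
  rw [Finset.sum_add_distrib]
  simp only [Finset.sum_ite_eq', Finset.mem_univ, if_true]
  have h1 := MvPolynomial.monomial_le_degreeOf 0 he
  have h2 := MvPolynomial.monomial_le_degreeOf i he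
  omega

theorem eval_lineSub (i : Fin 3) (m n z x : K) (F : MvPolynomial (Fin 3) K) :
    (lineSub i m n z F).eval x =
      MvPolynomial.eval (fun j => if j = 0 then m * x + n else if j = i then x else z) F := by
  have : (Polynomial.evalRingHom x).comp (lineSub i m n z).toRingHom =
      MvPolynomial.eval (fun j => if j = 0 then m * x + n else if j = i then x else z) := by
    apply MvPolynomial.ringHom_ext
    · intro r; simp [lineSub]
    · intro j
      simp only [lineSub, AlgHom.toRingHom_eq_coe, RingHom.coe_comp, RingHom.coe_coe,
        Function.comp_apply, MvPolynomial.aeval_X, MvPolynomial.eval_X]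
      split_ifs <;> simp
  exact congrArg (fun f => f F) this

open MvPolynomial in
theorem derivative_lineSub (i : Fin 3) (hi : i ≠ 0) (m n z : K) (F : MvPolynomial (Fin 3) K) :
    Polynomial.derivative (lineSub i m n z F) =
      lineSub i m n z (pderiv i F) + Polynomial.C m * lineSub i m n z (pderiv 0 F) := by
  induction F using MvPolynomial.induction_on with
  | C a => simp [lineSub]
  | add p q hp hq => simp only [map_add, hp, hq]; ring
  | mul_X p j hp =>
    have hX : Polynomial.derivative (lineSub i m n z (X j)) =
      lineSub i m n z (pderiv i (X j)) + Polynomial.C m * lineSub i m n z (pderiv 0 (X j)) := by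
      by_cases h0 : j = 0
      · subst h0
        simp [lineSub, pderiv_X_of_ne hi.symm]
      · by_cases h1 : j = i
        · subst h1
          simp [lineSub, pderiv_X_of_ne h0, h0]
        · simp [lineSub, pderiv_X_of_ne h0, pderiv_X_of_ne h1, h0, h1]
    simp only [map_mul, Polynomial.derivative_mul, hp, hX, Derivation.leibniz, map_add, smul_eq_mul]
    ring

open MvPolynomial in
theorem degreeOf_pderiv_le (i j : Fin 3) (F : MvPolynomial (Fin 3) K) :
    degreeOf j (pderiv i F) ≤ degreeOf j F := by
  rw [degreeOf_le_iff]
  intro e he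
  have : e + Finsupp.single i 1 ∈ F.support := by
    rw [mem_support_iff] at he ⊢
    rw [coeff_pderiv] at he
    intro h; simp [h] at he
  have := monomial_le_degreeOf j this
  simp at this
  omega

open MvPolynomial in
theorem degreeOf_pderiv_lt (i : Fin 3) (F : MvPolynomial (Fin 3) K) (h : 0 < degreeOf i F) :
    degreeOf i (pderiv i F) < degreeOf i F := by
  rw [degreeOf_lt_iff h]
  intro e he
  have : e + Finsupp.single i 1 ∈ F.support := by
    rw [mem_support_iff] at he ⊢
    rw [coeff_pderiv] at he
    intro h; simp [h] at he
  have := monomial_le_degreeOf i this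
  simp at this
  omega

open MvPolynomial in
/-- The numerator of the second derivative along the plane section through `X₀` and `Xᵢ`: it vanishes
on every line of type `i` contained in the zero set of `F`. -/
noncomputable def flecnode (i : Fin 3) (F : MvPolynomial (Fin 3) K) : MvPolynomial (Fin 3) K :=
  pderiv i (pderiv i F) * pderiv 0 F ^ 2 - 2 * pderiv 0 (pderiv i F) * pderiv i F * pderiv 0 F
    + pderiv 0 (pderiv 0 F) * pderiv i F ^ 2

open MvPolynomial in
theorem degreeOf_flecnode_le (i j : Fin 3) (F : MvPolynomial (Fin 3) K) :
    degreeOf j (flecnode i F) ≤ 3 * degreeOf j F := by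
  have h1 := degreeOf_pderiv_le 0 j F
  have h2 := degreeOf_pderiv_le i j F
  have h11 := (degreeOf_pderiv_le 0 j (pderiv 0 F))
  have h21 := (degreeOf_pderiv_le 0 j (pderiv i F))
  have h22 := (degreeOf_pderiv_le i j (pderiv i F))
  have hsq : ∀ P : MvPolynomial (Fin 3) K, degreeOf j (P ^ 2) ≤ 2 * degreeOf j P :=
    fun P => degreeOf_pow_le j P 2
  have hs1 := hsq (pderiv 0 F)
  have hs2 := hsq (pderiv i F)
  have e2 : degreeOf j (2 : MvPolynomial (Fin 3) K) = 0 := degreeOf_C (2 : K) j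
  refine (degreeOf_add_le _ _ _).trans (max_le ((degreeOf_sub_le _ _ _).trans (max_le ?_ ?_)) ?_)
  · refine (degreeOf_mul_le _ _ _).trans ?_
    omega
  · refine (degreeOf_mul_le _ _ _).trans ?_
    have a1 := degreeOf_mul_le j (2 * pderiv 0 (pderiv i F)) (pderiv i F)
    have a2 := degreeOf_mul_le j 2 (pderiv 0 (pderiv i F))
    omega
  · refine (degreeOf_mul_le _ _ _).trans ?_
    omega

open MvPolynomial in
theorem pderiv_comm' (i j : Fin 3) (F : MvPolynomial (Fin 3) K) :
    pderiv i (pderiv j F) = pderiv j (pderiv i F) := by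
  ext e
  simp only [coeff_pderiv]
  by_cases h : i = j
  · subst h; ring
  · have h' : ¬ j = i := fun h' => h h'.symm
    have hc : e + Finsupp.single i 1 + Finsupp.single j 1 =
      e + Finsupp.single j 1 + Finsupp.single i 1 := by abel
    simp [h, h', hc]
    ring

open MvPolynomial in
/-- Differentiating `F` twice along a contained line. -/
theorem lineSub_flecnode (i : Fin 3) (hi : i ≠ 0) (m n z : K) (F : MvPolynomial (Fin 3) K)
    (h : lineSub i m n z F = 0) : lineSub i m n z (flecnode i F) = 0 := by
  have h1 := derivative_lineSub i hi m n z F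
  have h2 := derivative_lineSub i hi m n z (pderiv i F)
  have h3 := derivative_lineSub i hi m n z (pderiv 0 F)
  rw [h, Polynomial.derivative_zero] at h1
  have h4 : lineSub i m n z (pderiv i F) = - Polynomial.C m * lineSub i m n z (pderiv 0 F) := by
    linear_combination -h1
  have h5 : Polynomial.derivative (lineSub i m n z (pderiv i F)) =
      - Polynomial.C m * Polynomial.derivative (lineSub i m n z (pderiv 0 F)) := by
    rw [h4]; simp
  rw [h2, h3, pderiv_comm' i 0] at h5
  simp only [flecnode, map_add, map_sub, map_mul, map_pow, map_ofNat, h4]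
  linear_combination (lineSub i m n z (pderiv 0 F)) ^ 2 * h5
end lineSub

/-! ### Ruled surfaces -/

section ruled

variable {K : Type*} [Field K]

/-- If `F` divides its flecnode polynomial, the tangent line of type `i` at a point where
`∂F/∂X₀ ≠ 0` is contained in the zero set of `F`: otherwise compare the orders of vanishing in the
second order differential equation satisfied by the restriction of `F` to that line. -/
theorem lineSub_eq_zero_of_dvd_flecnode (i : Fin 3) (hi : i ≠ 0) (F : MvPolynomial (Fin 3) K)
    (hF : F ∣ flecnode i F) (m n z ξ : K) (h0 : (lineSub i m n z F).eval ξ = 0)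
    (h1 : (lineSub i m n z (MvPolynomial.pderiv 0 F)).eval ξ ≠ 0)
    (hm : (lineSub i m n z (MvPolynomial.pderiv i F)).eval ξ +
      m * (lineSub i m n z (MvPolynomial.pderiv 0 F)).eval ξ = 0)
    (M : ℕ) (hdeg : MvPolynomial.degreeOf i F + MvPolynomial.degreeOf 0 F ≤ M)
    (hchar : ∀ j : ℕ, 0 < j → j ≤ M → (j : K) ≠ 0) : lineSub i m n z F = 0 := by
  by_contra hg
  obtain ⟨q, hq⟩ := hF
  have e1 := derivative_lineSub i hi m n z F
  have e2 := derivative_lineSub i hi m n z (MvPolynomial.pderiv i F)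
  have e3 := derivative_lineSub i hi m n z (MvPolynomial.pderiv 0 F)
  have hq' := congrArg (lineSub i m n z) hq
  simp only [flecnode, map_add, map_sub, map_mul, map_pow, map_ofNat] at hq'
  set g := lineSub i m n z F with hgdef
  set h := lineSub i m n z (MvPolynomial.pderiv 0 F) with hhdef
  rw [pderiv_comm' i 0] at e3
  set u := lineSub i m n z (MvPolynomial.pderiv i F) with hu
  set a := lineSub i m n z (MvPolynomial.pderiv i (MvPolynomial.pderiv i F))
  set b := lineSub i m n z (MvPolynomial.pderiv 0 (MvPolynomial.pderiv i F))
  set c := lineSub i m n z (MvPolynomial.pderiv 0 (MvPolynomial.pderiv 0 F))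
  set Q := lineSub i m n z q
  have e4 : Polynomial.derivative (Polynomial.derivative g) =
      a + 2 * Polynomial.C m * b + Polynomial.C m ^ 2 * c := by
    rw [e1, Polynomial.derivative_add, Polynomial.derivative_mul, e2, e3]
    simp
    ring
  have key : h ^ 2 * Polynomial.derivative (Polynomial.derivative g) =
      g * Q + Polynomial.derivative g * (2 * h * (b + Polynomial.C m * c)
        - c * Polynomial.derivative g) := by
    have hu' : u = Polynomial.derivative g - Polynomial.C m * h := by rw [e1]; ring
    rw [hu'] at hq'
    rw [e4]
    linear_combination hq'
  obtain ⟨w, hw, hndvd⟩ := Polynomial.exists_eq_pow_rootMultiplicity_mul_and_not_dvd g hg ξ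
  set μ := g.rootMultiplicity ξ with hμ
  have hd0 : (Polynomial.derivative g).eval ξ = 0 := by
    rw [e1]; simp only [Polynomial.eval_add, Polynomial.eval_mul, Polynomial.eval_C]; exact hm
  have hwξ : w.eval ξ ≠ 0 := by
    intro h; exact hndvd (Polynomial.dvd_iff_isRoot.2 h)
  have hμ2 : 2 ≤ μ := by
    have : 1 < μ := by
      rw [hμ, Polynomial.one_lt_rootMultiplicity_iff_isRoot hg]
      exact ⟨h0, hd0⟩
    omega
  have hμM : μ ≤ M := by
    refine le_trans ?_ ((natDegree_lineSub_le i hi m n z F).trans hdeg)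
    classical
    calc μ = Multiset.count ξ g.roots := (Polynomial.count_roots g).symm
      _ ≤ Multiset.card g.roots := Multiset.count_le_card _ _
      _ ≤ g.natDegree := Polynomial.card_roots' g
  obtain ⟨k, hk⟩ : ∃ k, μ = k + 2 := ⟨μ - 2, by omega⟩
  rw [hk] at hw
  have hd1 : Polynomial.derivative g = (Polynomial.X - Polynomial.C ξ) ^ (k + 1) *
      (((k : ℕ) + 2 : Polynomial K) * w
        + (Polynomial.X - Polynomial.C ξ) * Polynomial.derivative w) := by
    rw [hw, Polynomial.derivative_mul, Polynomial.derivative_X_sub_C_pow]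
    have h2 : (Polynomial.C (2 : K)) = 2 := map_ofNat _ 2
    simp [h2]
    ring
  have hd2 : Polynomial.derivative (Polynomial.derivative g) =
      (Polynomial.X - Polynomial.C ξ) ^ k * (((k : ℕ) + 1 : Polynomial K) *
      (((k : ℕ) + 2 : Polynomial K) * w + (Polynomial.X - Polynomial.C ξ) * Polynomial.derivative w)
        + (Polynomial.X - Polynomial.C ξ) * Polynomial.derivative (((k : ℕ) + 2 : Polynomial K) * w
        + (Polynomial.X - Polynomial.C ξ) * Polynomial.derivative w)) := by
    rw [hd1, Polynomial.derivative_mul, Polynomial.derivative_X_sub_C_pow]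
    simp
    ring
  rw [hd2] at key
  have hne : (Polynomial.X - Polynomial.C ξ) ^ k ≠ 0 := pow_ne_zero _ (Polynomial.X_sub_C_ne_zero ξ)
  have key2 : h ^ 2 * (((k : ℕ) + 1 : Polynomial K) *
      (((k : ℕ) + 2 : Polynomial K) * w + (Polynomial.X - Polynomial.C ξ) * Polynomial.derivative w)
        + (Polynomial.X - Polynomial.C ξ) * Polynomial.derivative (((k : ℕ) + 2 : Polynomial K) * w
        + (Polynomial.X - Polynomial.C ξ) * Polynomial.derivative w)) =
      (Polynomial.X - Polynomial.C ξ) * ((Polynomial.X - Polynomial.C ξ) * w * Q +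
       (((k : ℕ) + 2 : Polynomial K) * w
        + (Polynomial.X - Polynomial.C ξ) * Polynomial.derivative w) *
        (2 * h * (b + Polynomial.C m * c) - c * Polynomial.derivative g)) := by
    apply mul_left_cancel₀ hne
    have : g * Q = (Polynomial.X - Polynomial.C ξ) ^ (k+2) * w * Q := by rw [← hw]
    have h3 : Polynomial.derivative g * (2 * h * (b + Polynomial.C m * c)
        - c * Polynomial.derivative g) = (Polynomial.X - Polynomial.C ξ) ^ (k + 1) *
      (((k : ℕ) + 2 : Polynomial K) * w
        + (Polynomial.X - Polynomial.C ξ) * Polynomial.derivative w) * (2 * h * (b + Polynomial.C m * c)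
        - c * Polynomial.derivative g) := by rw [← hd1]
    rw [this, h3] at key
    rw [pow_succ, pow_succ] at key
    linear_combination key
  have key3 := congrArg (Polynomial.eval ξ) key2
  simp only [Polynomial.eval_mul, Polynomial.eval_add, Polynomial.eval_sub, Polynomial.eval_X,
    Polynomial.eval_C, sub_self, zero_mul, add_zero, Polynomial.eval_pow,
    Polynomial.eval_natCast, Polynomial.eval_one, Polynomial.eval_ofNat] at key3
  have c1 := hchar (k + 1) (by omega) (by omega)
  have c2 := hchar (k + 2) (by omega) (by omega)
  push_cast at c1 c2
  have := mul_ne_zero (pow_ne_zero 2 h1) (mul_ne_zero c1 (mul_ne_zero c2 hwξ))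
  exact this key3

open MvPolynomial in
/-- Pseudo-division by a polynomial `H X₀ + R` that is linear in `X₀`. -/
theorem exists_pseudoDivision (H R : MvPolynomial (Fin 3) K)
    (hH : H ∈ supported K ({1, 2} : Set (Fin 3))) (hR : R ∈ supported K ({1, 2} : Set (Fin 3)))
    (F : MvPolynomial (Fin 3) K) :
    ∃ (N : ℕ) (Q ρ : MvPolynomial (Fin 3) K), ρ ∈ supported K ({1, 2} : Set (Fin 3)) ∧
      H ^ N * F = (H * X 0 + R) * Q + ρ := by
  induction F using MvPolynomial.induction_on with
  | C a => exact ⟨0, 0, C a, Subalgebra.algebraMap_mem _ a, by simp⟩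
  | add p q hp hq =>
    obtain ⟨N, Q, ρ, h1, h2⟩ := hp
    obtain ⟨N', Q', ρ', h1', h2'⟩ := hq
    refine ⟨N + N', H ^ N' * Q + H ^ N * Q', H ^ N' * ρ + H ^ N * ρ',
      add_mem (mul_mem (pow_mem hH _) h1) (mul_mem (pow_mem hH _) h1'), ?_⟩
    rw [pow_add]
    linear_combination H ^ N' * h2 + H ^ N * h2'
  | mul_X p j hp =>
    obtain ⟨N, Q, ρ, h1, h2⟩ := hp
    by_cases hj : j = 0
    · subst hj
      refine ⟨N + 1, Q * H * X 0 + ρ, - (ρ * R), neg_mem (mul_mem h1 hR), ?_⟩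
      rw [pow_succ]
      linear_combination H * X 0 * h2
    · refine ⟨N, Q * X j, ρ * X j, mul_mem h1 ?_, ?_⟩
      · exact X_mem_supported.2 (by fin_cases j <;> simp_all)
      · linear_combination X j * h2

open MvPolynomial in
theorem eval_eq_of_mem_supported (ρ : MvPolynomial (Fin 3) K)
    (hρ : ρ ∈ supported K ({1, 2} : Set (Fin 3))) (x y : Fin 3 → K) (h1 : x 1 = y 1)
    (h2 : x 2 = y 2) : eval x ρ = eval y ρ := by
  apply eval₂Hom_congr' rfl _ rfl
  intro i hi _
  have := (mem_supported.1 hρ) hi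
  rcases this with h | h
  · rw [h, h1]
  · rw [Set.mem_singleton_iff.1 h, h2]

open MvPolynomial in
/-- A ruled irreducible surface `F` containing a line `X₀ = m X₁ + n`, `X₂ = z` along which
`∂F/∂X₀` does not vanish identically divides the equation of the surface swept out by the tangent
lines with fixed `X₁`; this equation has degree one in `X₀` and in `X₂`. -/
theorem dvd_of_ruled [Infinite K] (F : MvPolynomial (Fin 3) K) (hFi : Irreducible F)
    (hF : F ∣ flecnode 2 F) (m n z : K) (h0 : lineSub 1 m n z F = 0)
    (h1 : lineSub 1 m n z (pderiv 0 F) ≠ 0)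
    (M : ℕ) (hdeg : degreeOf 2 F + degreeOf 0 F ≤ M)
    (hchar : ∀ j : ℕ, 0 < j → j ≤ M → (j : K) ≠ 0) :
    F ∣ Polynomial.aeval (X 1) (lineSub 1 m n z (pderiv 0 F)) * (X 0 - (C m * X 1 + C n)) +
      Polynomial.aeval (X 1) (lineSub 1 m n z (pderiv 2 F)) * (X 2 - C z) := by
  set h := lineSub 1 m n z (pderiv 0 F) with hh
  set k := lineSub 1 m n z (pderiv 2 F) with hk
  set H : MvPolynomial (Fin 3) K := Polynomial.aeval (X 1) h with hH
  set N' : MvPolynomial (Fin 3) K := Polynomial.aeval (X 1) k with hN'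
  have evalA : ∀ (x : Fin 3 → K) (P : Polynomial K),
      eval x (Polynomial.aeval (X 1) P) = P.eval (x 1) := by
    intro x P
    have := Polynomial.hom_eval₂ P (algebraMap K (MvPolynomial (Fin 3) K)) (eval x) (X 1)
    rw [Polynomial.aeval_def, this, Polynomial.eval]
    congr 1
    · ext a; simp
    · simp
  have memA : ∀ P : Polynomial K, Polynomial.aeval (X 1 : MvPolynomial (Fin 3) K) P ∈
      supported K ({1, 2} : Set (Fin 3)) := by
    intro P
    have hX : (X 1 : MvPolynomial (Fin 3) K) ∈ supported K ({1, 2} : Set (Fin 3)) :=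
      X_mem_supported.2 (by simp)
    rw [Polynomial.aeval_eq_sum_range]
    exact sum_mem fun i _ => Subalgebra.smul_mem _ (pow_mem hX i) _
  have X1 : (X 1 : MvPolynomial (Fin 3) K) ∈ supported K ({1, 2} : Set (Fin 3)) :=
    X_mem_supported.2 (by simp)
  have X2 : (X 2 : MvPolynomial (Fin 3) K) ∈ supported K ({1, 2} : Set (Fin 3)) :=
    X_mem_supported.2 (by simp)
  have CC : ∀ a : K, (C a : MvPolynomial (Fin 3) K) ∈ supported K ({1, 2} : Set (Fin 3)) :=
    fun a => Subalgebra.algebraMap_mem _ a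
  obtain ⟨N, Q, ρ, hρ, hdiv⟩ := exists_pseudoDivision H (-(H * (C m * X 1 + C n)) + N' * (X 2 - C z))
    (memA h) (add_mem (neg_mem (mul_mem (memA h) (add_mem (mul_mem (CC m) X1) (CC n))))
      (mul_mem (memA k) (sub_mem X2 (CC z)))) F
  -- `F` vanishes wherever the linear equation does, away from the zeros of `H`.
  have van : ∀ x : Fin 3 → K, h.eval (x 1) ≠ 0 →
      h.eval (x 1) * (x 0 - (m * x 1 + n)) + k.eval (x 1) * (x 2 - z) = 0 → eval x F = 0 := by
    intro x hx hl
    set s := - k.eval (x 1) / h.eval (x 1) with hs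
    set r := m * x 1 + n - s * z with hr
    have base : ∀ P : MvPolynomial (Fin 3) K,
        (lineSub 2 s r (x 1) P).eval z = (lineSub 1 m n z P).eval (x 1) := by
      intro P
      rw [eval_lineSub, eval_lineSub]
      congr 2
      funext j
      fin_cases j
      · simp [hr]
      · simp
      · simp
    have hL : lineSub 2 s r (x 1) F = 0 := by
      apply lineSub_eq_zero_of_dvd_flecnode 2 (by decide) F hF s r (x 1) z _ _ _ M hdeg hchar
      · rw [base, h0, Polynomial.eval_zero]
      · rw [base]; exact hx
      · rw [base, base, ← hh, ← hk, hs]; field_simp; ring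
    have := eval_lineSub 2 s r (x 1) (x 2) F
    rw [hL, Polynomial.eval_zero] at this
    rw [this]
    congr 2
    funext j
    fin_cases j
    · have : x 0 = s * x 2 + r := by
        rw [hr, hs]; field_simp; linear_combination hl
      simpa using this
    · simp
    · simp
  obtain ⟨y1, hy1⟩ : ∃ y, h.eval y ≠ 0 := by
    by_contra hcon
    push Not at hcon
    exact h1 (Polynomial.funext (by simpa using hcon))
  have hHne : H ≠ 0 := by
    intro h'
    have := evalA (fun _ => y1) h
    rw [← hH, h'] at this
    simp at this
    exact hy1 this.symm
  have hρ0 : ρ = 0 := by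
    have : H * ρ = 0 := by
      apply MvPolynomial.funext
      intro x
      rw [map_mul, hH, evalA, map_zero]
      by_cases hx : h.eval (x 1) = 0
      · rw [hx, zero_mul]
      · set x' : Fin 3 → K :=
          ![m * x 1 + n - k.eval (x 1) * (x 2 - z) / h.eval (x 1), x 1, x 2] with hx'
        have hl : h.eval (x' 1) * (x' 0 - (m * x' 1 + n)) + k.eval (x' 1) * (x' 2 - z) = 0 := by
          simp [hx']
          field_simp
          ring
        have hv := van x' (by simpa [hx'] using hx) hl
        have hd := congrArg (eval x') hdiv
        simp only [map_mul, map_add, map_neg, map_sub, map_pow, hv, eval_X, eval_C, mul_zero] at hd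
        rw [hH, hN', evalA, evalA] at hd
        have : eval x' ρ = 0 := by linear_combination (- eval x' Q) * hl - hd
        rw [eval_eq_of_mem_supported ρ hρ x x' (by simp [hx']) (by simp [hx']), this, mul_zero]
    exact (mul_eq_zero.1 this).resolve_left hHne
  rw [hρ0, add_zero] at hdiv
  have hdvd : F ∣ (H * X 0 + (-(H * (C m * X 1 + C n)) + N' * (X 2 - C z))) * Q :=
    ⟨H ^ N, by rw [← hdiv]; ring⟩
  rcases (hFi.prime).dvd_or_dvd hdvd with hd | hd
  · convert hd using 1
    ring
  · exfalso
    obtain ⟨Q', rfl⟩ := hd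
    have hc : H ^ N = (H * X 0 + (-(H * (C m * X 1 + C n)) + N' * (X 2 - C z))) * Q' := by
      apply mul_right_cancel₀ hFi.ne_zero
      rw [hdiv]; ring
    have hd := congrArg (eval ![m * y1 + n, y1, z]) hc
    simp only [map_mul, map_add, map_neg, map_sub, map_pow, eval_X, eval_C] at hd
    rw [hH, hN', evalA, evalA] at hd
    simp at hd
    exact hy1 hd.1

end ruled

/-! ### Collinear parameters and common lines of two surfaces -/

section collinear

variable {K : Type*} [Field K]

theorem lineSub_one_aeval (m n z : K) (P : Polynomial K) :
    lineSub 1 m n z (Polynomial.aeval (MvPolynomial.X 1) P) = P := by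
  have : (lineSub 1 m n z (Polynomial.aeval (MvPolynomial.X 1) P)) =
      Polynomial.aeval (lineSub 1 m n z (MvPolynomial.X 1)) P :=
    (Polynomial.aeval_algHom_apply (lineSub 1 m n z) (MvPolynomial.X 1) P).symm
  rw [this]
  simp [lineSub]

/-- Lines `X₀ = p X₁ + q`, `X₂ = t` contained in a surface of the special shape of `dvd_of_ruled`
correspond to collinear points `(t, p, q)`. -/
theorem collinear_of_dvd (F : MvPolynomial (Fin 3) K) (m n z : K) (h k : Polynomial K) (hh : h ≠ 0)
    (hF : F ∣ Polynomial.aeval (MvPolynomial.X 1) h *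
        (MvPolynomial.X 0 - (MvPolynomial.C m * MvPolynomial.X 1 + MvPolynomial.C n)) +
      Polynomial.aeval (MvPolynomial.X 1) k * (MvPolynomial.X 2 - MvPolynomial.C z))
    (m₁ n₁ z₁ m₂ n₂ z₂ : K) (h1 : lineSub 1 m₁ n₁ z₁ F = 0) (h2 : lineSub 1 m₂ n₂ z₂ F = 0) :
    (z₂ - z) * (m₁ - m) = (z₁ - z) * (m₂ - m) ∧ (z₂ - z) * (n₁ - n) = (z₁ - z) * (n₂ - n) := by
  have key : ∀ m₁ n₁ z₁ : K, lineSub 1 m₁ n₁ z₁ F = 0 →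
      h * (Polynomial.C (m₁ - m) * Polynomial.X + Polynomial.C (n₁ - n)) =
        - (Polynomial.C (z₁ - z)) * k := by
    intro m₁ n₁ z₁ h1
    obtain ⟨Q, hQ⟩ := hF
    have := congrArg (lineSub 1 m₁ n₁ z₁) hQ
    rw [map_mul, h1, zero_mul] at this
    simp only [map_add, map_mul, map_sub, lineSub_one_aeval] at this
    simp only [lineSub, MvPolynomial.aeval_X, MvPolynomial.aeval_C] at this
    simp at this
    simp only [map_sub]
    linear_combination this
  have e1 := key _ _ _ h1
  have e2 := key _ _ _ h2
  have e3 : Polynomial.C (z₂ - z) * (Polynomial.C (m₁ - m) * Polynomial.X + Polynomial.C (n₁ - n)) =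
      Polynomial.C (z₁ - z) * (Polynomial.C (m₂ - m) * Polynomial.X + Polynomial.C (n₂ - n)) := by
    apply mul_left_cancel₀ hh
    linear_combination Polynomial.C (z₂ - z) * e1 - Polynomial.C (z₁ - z) * e2
  have c0 := congrArg (fun P => Polynomial.coeff P 0) e3
  have c1 := congrArg (fun P => Polynomial.coeff P 1) e3
  simp only [mul_add, ← mul_assoc, ← Polynomial.C_mul] at c0 c1
  simp [-map_mul, -map_sub, Polynomial.coeff_C] at c0 c1
  exact ⟨c1, c0⟩

end collinear

section bezout

variable {K : Type*} [Field K]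

open MvPolynomial in
theorem finSuccEquiv_rename_succ (ρ : MvPolynomial (Fin 2) K) :
    finSuccEquiv K 2 (rename Fin.succ ρ) = Polynomial.C ρ := by
  induction ρ using MvPolynomial.induction_on with
  | C a => simp [finSuccEquiv_apply]
  | add p q hp hq => simp [hp, hq]
  | mul_X p j hp => simp [hp, finSuccEquiv_X_succ]

open Polynomial in
/-- A vanishing resultant gives `p`, `q` of degree less than `deg g`, `deg f` with `f q + g p = 0`,
which is impossible when `f` and `g` are coprime. -/
theorem resultant_ne_zero_of_isRelPrime {R : Type*} [CommRing R] [IsDomain R]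
    [UniqueFactorizationMonoid R] (f g : R[X]) (hf : f ≠ 0) (h : IsRelPrime f g) :
    f.resultant g ≠ 0 := by
  intro h0
  obtain ⟨v, hv, hv0⟩ := Matrix.exists_mulVec_eq_zero_iff.2 h0
  rw [← toMatrix_sylvesterMap' f g le_rfl le_rfl] at hv0
  set b := ((degreeLT.basis R f.natDegree).prod
    (degreeLT.basis R g.natDegree)).reindex finSumFinEquiv
  set x := b.equivFun.symm v with hx
  have hvx : v = b.repr x := by
    rw [← Module.Basis.equivFun_apply, hx, LinearEquiv.apply_symm_apply]
  have hx0 : x ≠ 0 := by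
    intro h'; rw [h'] at hvx; apply hv; rw [hvx]; simp
  rw [hvx, LinearMap.toMatrix_mulVec_repr] at hv0
  have hs : sylvesterMap f g le_rfl le_rfl x = 0 := by
    apply (degreeLT.basis R (f.natDegree + g.natDegree)).repr.injective
    ext i
    simpa using congrFun hv0 i
  have hs' := congrArg Subtype.val hs
  rw [sylvesterMap_apply_coe] at hs'
  obtain ⟨⟨p, hp⟩, ⟨q, hq⟩⟩ := x
  simp only [ZeroMemClass.coe_zero] at hs'
  have hdvd : f ∣ g * p := ⟨-q, by linear_combination hs'⟩
  have hfp : f ∣ p := h.dvd_of_dvd_mul_left hdvd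
  have hp0 : p = 0 := by
    by_contra hne
    have h1 := Polynomial.degree_le_of_dvd hfp hne
    rw [Polynomial.mem_degreeLT] at hp
    rw [Polynomial.degree_eq_natDegree hf] at h1
    exact absurd hp (not_lt.2 h1)
  subst hp0
  have hq0 : q = 0 := by
    simp only [mul_zero, add_zero] at hs'
    exact (mul_eq_zero.1 hs').resolve_left hf
  subst hq0
  exact hx0 rfl

open MvPolynomial in
theorem degreeOf_resultant_le (f g : Polynomial (MvPolynomial (Fin 2) K)) (m n a b : ℕ)
    (hf : ∀ i, degreeOf 0 (f.coeff i) ≤ a) (hg : ∀ i, degreeOf 0 (g.coeff i) ≤ b) :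
    degreeOf 0 (f.resultant g m n) ≤ m * b + n * a := by
  classical
  rw [Polynomial.resultant, Matrix.det_apply]
  refine (degreeOf_sum_le _ _ _).trans (Finset.sup_le fun σ _ => ?_)
  have h1 : degreeOf 0 (∏ i, f.sylvester g m n (σ i) i) ≤ m * b + n * a := by
    refine (degreeOf_prod_le _ _ _).trans ?_
    rw [Fin.sum_univ_add]
    refine add_le_add ?_ ?_
    · refine (Finset.sum_le_card_nsmul _ _ b ?_).trans (by simp)
      intro i _
      simp only [Polynomial.sylvester, Matrix.of_apply, Fin.addCases_left]
      split_ifs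
      · exact hg _
      · simp
    · refine (Finset.sum_le_card_nsmul _ _ a ?_).trans (by simp)
      intro i _
      simp only [Polynomial.sylvester, Matrix.of_apply, Fin.addCases_right]
      split_ifs
      · exact hf _
      · simp
  rcases Int.units_eq_one_or (Equiv.Perm.sign σ) with h | h
  · rw [h, one_smul]; exact h1
  · rw [h, Units.neg_smul, one_smul, degreeOf_neg]; exact h1

open MvPolynomial in
/-- A Bézout type bound: coprime `g` and `h` have few common lines in the planes `X₁ = w`. The
eliminant of `X₀` is a nonzero polynomial in `X₁, X₂` divisible by `X₁ - w` for every such `w`. -/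
theorem card_common_lines_le [Infinite K] [DecidableEq K] (g h : MvPolynomial (Fin 3) K)
    (hg : g ≠ 0)
    (hrel : IsRelPrime g h) (hdeg : degreeOf 0 g ≠ 0 ∨ degreeOf 0 h ≠ 0) (W : Finset K)
    (s r : K → K) :
    #{w ∈ W | lineSub 2 (s w) (r w) w g = 0 ∧ lineSub 2 (s w) (r w) w h = 0} ≤
      degreeOf 1 g * degreeOf 0 h + degreeOf 0 g * degreeOf 1 h := by
  set f' := finSuccEquiv K 2 g with hf'
  set g' := finSuccEquiv K 2 h with hg'
  have hf0 : f' ≠ 0 := by rw [hf']; simpa using hg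
  have hrel' : IsRelPrime f' g' := by
    intro d hd1 hd2
    have := hrel (d := (finSuccEquiv K 2).symm d)
      (by obtain ⟨c, hc⟩ := hd1
          exact ⟨(finSuccEquiv K 2).symm c, by rw [← map_mul, ← hc, hf', AlgEquiv.symm_apply_apply]⟩)
      (by obtain ⟨c, hc⟩ := hd2
          exact ⟨(finSuccEquiv K 2).symm c, by rw [← map_mul, ← hc, hg', AlgEquiv.symm_apply_apply]⟩)
    have h2 := this.map (finSuccEquiv K 2)
    rwa [AlgEquiv.apply_symm_apply] at h2
  have hres := resultant_ne_zero_of_isRelPrime f' g' hf0 hrel'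
  have hfd : f'.natDegree = degreeOf 0 g := natDegree_finSuccEquiv g
  have hgd : g'.natDegree = degreeOf 0 h := natDegree_finSuccEquiv h
  obtain ⟨p, q, -, -, hpq⟩ := Polynomial.exists_mul_add_mul_eq_C_resultant f' g' le_rfl le_rfl
    (by rwa [hfd, hgd])
  have hρdeg := degreeOf_resultant_le f' g' f'.natDegree g'.natDegree (degreeOf 1 g) (degreeOf 1 h)
    (fun i => degreeOf_coeff_finSuccEquiv g 0 i) (fun i => degreeOf_coeff_finSuccEquiv h 0 i)
  set ρ := f'.resultant g' with hρ
  rw [hfd, hgd] at hρdeg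
  set R := rename Fin.succ ρ with hR
  have hRe : R = g * (finSuccEquiv K 2).symm p + h * (finSuccEquiv K 2).symm q := by
    apply (finSuccEquiv K 2).injective
    rw [finSuccEquiv_rename_succ, map_add, map_mul, map_mul, AlgEquiv.apply_symm_apply,
      AlgEquiv.apply_symm_apply, hpq]
  have hR0 : R ≠ 0 := by
    rw [hR]
    exact fun h' => hres (rename_injective _ (Fin.succ_injective _) (by simpa using h'))
  have hRd0 : degreeOf 0 R = 0 := by
    rw [← natDegree_finSuccEquiv, finSuccEquiv_rename_succ, Polynomial.natDegree_C]
  have hRd1 : degreeOf 1 R = degreeOf 0 ρ :=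
    degreeOf_rename_of_injective (Fin.succ_injective 2) 0
  obtain ⟨x, hx⟩ : ∃ x, eval x R ≠ 0 := by
    by_contra hcon
    push Not at hcon
    exact hR0 (MvPolynomial.funext (by simpa using hcon))
  have hind : ∀ y y' : Fin 3 → K, y 1 = y' 1 → y 2 = y' 2 → eval y R = eval y' R := by
    intro y y' h1 h2
    rw [hR, eval_rename, eval_rename]
    congr 2
    funext i
    fin_cases i
    · exact h1
    · exact h2
  set P := lineSub 1 0 0 (x 2) R with hP
  have hP0 : P ≠ 0 := by
    intro h'
    have := eval_lineSub 1 0 0 (x 2) (x 1) R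
    rw [← hP, h', Polynomial.eval_zero] at this
    apply hx
    rw [this]
    exact hind _ _ (by simp) (by simp)
  have hPd : P.natDegree ≤ degreeOf 0 ρ := by
    have := natDegree_lineSub_le 1 (by decide) 0 0 (x 2) R
    rw [hRd0, hRd1] at this
    simpa using this
  calc _ ≤ P.roots.toFinset.card := by
        apply Finset.card_le_card
        intro w hw
        simp only [Finset.mem_filter] at hw
        rw [Multiset.mem_toFinset, Polynomial.mem_roots hP0, Polynomial.IsRoot, hP, eval_lineSub]
        have h1 := congrArg (lineSub 2 (s w) (r w) w) hRe
        rw [map_add, map_mul, map_mul, hw.2.1, hw.2.2, zero_mul, zero_mul, add_zero] at h1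
        have h2 := eval_lineSub 2 (s w) (r w) w (x 2) R
        rw [h1, Polynomial.eval_zero] at h2
        rw [h2]
        exact hind _ _ (by simp) (by simp)
    _ ≤ Multiset.card P.roots := Multiset.toFinset_card_le _
    _ ≤ P.natDegree := Polynomial.card_roots' P
    _ ≤ degreeOf 0 ρ := hPd
    _ ≤ _ := hρdeg
    _ = _ := by ring

end bezout

/-! ### Lines of a surface meeting many other lines -/

section bad

variable {K : Type*} [Field K]

theorem card_filter_eval_le [DecidableEq K] (T : Finset K) (P : Polynomial K) (hP : P ≠ 0) :
    #{t ∈ T | P.eval t = 0} ≤ P.natDegree := by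
  refine Polynomial.card_le_degree_of_subset_roots (p := P) ?_
  intro t ht
  rw [Polynomial.mem_roots hP]
  simpa using (Finset.mem_filter.1 (Finset.mem_def.2 ht)).2

open MvPolynomial in
theorem pderiv_ne_zero (F : MvPolynomial (Fin 3) K) (h : degreeOf 0 F ≠ 0)
    (hc : (degreeOf 0 F : K) ≠ 0) : pderiv 0 F ≠ 0 := by
  intro h0
  have hF : F ≠ 0 := by rintro rfl; simp at h
  obtain ⟨e, he, he'⟩ : ∃ e ∈ F.support, degreeOf 0 F = e 0 := by
    rw [degreeOf_eq_sup]
    exact Finset.exists_mem_eq_sup _ (by simpa using hF) _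
  have h1 : e = (e - Finsupp.single 0 1) + Finsupp.single 0 1 := by
    rw [tsub_add_cancel_of_le]
    rw [Finsupp.single_le_iff]
    omega
  have h2 := coeff_pderiv (i := 0) F (e - Finsupp.single 0 1)
  rw [h0, ← h1, coeff_zero] at h2
  have h3 : ((e - Finsupp.single 0 1 : Fin 3 →₀ ℕ) 0 : K) + 1 = (degreeOf 0 F : K) := by
    rw [he']
    have : (e - Finsupp.single 0 1 : Fin 3 →₀ ℕ) 0 + 1 = e 0 := by
      simp; omega
    rw [← this]; push_cast; rfl
  rw [h3] at h2
  exact mul_ne_zero (mem_support_iff.1 he) hc h2.symm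

theorem eval_lineSub_incident (m n t s r w : K) (h : m * w + n = s * t + r)
    (F : MvPolynomial (Fin 3) K) :
    (lineSub 1 m n t F).eval w = (lineSub 2 s r w F).eval t := by
  rw [eval_lineSub, eval_lineSub]
  congr 2
  funext j
  fin_cases j
  · simpa using h
  · simp
  · simp

variable [DecidableEq K]

open MvPolynomial in
/-- The lines `X₀ = s X₂ + r`, `X₁ = w` contained in the surface `F` that meet more lines
`X₀ = p X₁ + q`, `X₂ = t` of the surface than the degree of `F` accounts for. -/
noncomputable def badLines (T W : Finset K) (p q s r : K → K) (k : ℕ)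
    (F : MvPolynomial (Fin 3) K) : Finset K := by
  classical
  exact {w ∈ W | lineSub 2 (s w) (r w) w F = 0 ∧ degreeOf 2 F + degreeOf 0 F + k <
    #{t ∈ T | p t * w + q t = s w * t + r w ∧ lineSub 1 (p t) (q t) t F = 0}}

open MvPolynomial in
theorem mem_badLines (T W : Finset K) (p q s r : K → K) (k : ℕ)
    (F : MvPolynomial (Fin 3) K) (w : K) : w ∈ badLines T W p q s r k F ↔ w ∈ W ∧
      lineSub 2 (s w) (r w) w F = 0 ∧ degreeOf 2 F + degreeOf 0 F + k <
    #{t ∈ T | p t * w + q t = s w * t + r w ∧ lineSub 1 (p t) (q t) t F = 0} := by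
  classical
  unfold badLines
  rw [Finset.mem_filter]

/-- A line not contained in the surface `F` meets few lines of the surface. -/
theorem card_incident_le (T : Finset K) (p q : K → K) (s r w : K) (F : MvPolynomial (Fin 3) K)
    (h : lineSub 2 s r w F ≠ 0) :
    #{t ∈ T | p t * w + q t = s * t + r ∧ lineSub 1 (p t) (q t) t F = 0} ≤
      MvPolynomial.degreeOf 2 F + MvPolynomial.degreeOf 0 F := by
  refine le_trans ?_ (natDegree_lineSub_le 2 (by decide) s r w F)
  refine le_trans ?_ (card_filter_eval_le T _ h)
  apply Finset.card_le_card
  intro t ht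
  simp only [Finset.mem_filter] at ht ⊢
  refine ⟨ht.1, ?_⟩
  rw [← eval_lineSub_incident _ _ _ _ _ _ ht.2.1, ht.2.2, Polynomial.eval_zero]

variable (T W : Finset K) (p q s r : K → K) (k : ℕ)

open MvPolynomial in
/-- A surface whose equation does not involve `X₀` has no bad lines: a point outside it bounds the
number of parameters `t` whose line is contained in it. -/
theorem badLines_eq_empty [Infinite K] (F : MvPolynomial (Fin 3) K) (hF : F ≠ 0)
    (h0 : degreeOf 0 F = 0) : badLines T W p q s r k F = ∅ := by
  rw [Finset.eq_empty_iff_forall_notMem]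
  intro w hw
  rw [mem_badLines] at hw
  obtain ⟨-, -, hw⟩ := hw
  have hsup : F ∈ supported K ({1, 2} : Set (Fin 3)) := by
    rw [mem_supported]
    intro i hi
    have h1 := mem_vars_iff_degreeOf_ne_zero.1 hi
    fin_cases i
    · exact absurd h0 h1
    · simp
    · simp
  obtain ⟨x, hx⟩ : ∃ x, eval x F ≠ 0 := by
    by_contra hcon
    push Not at hcon
    exact hF (MvPolynomial.funext (by simpa using hcon))
  have hP : lineSub 2 0 0 (x 1) F ≠ 0 := by
    intro h'
    have h1 := eval_lineSub 2 0 0 (x 1) (x 2) F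
    rw [h', Polynomial.eval_zero] at h1
    apply hx
    rw [h1]
    exact eval_eq_of_mem_supported F hsup _ _ (by simp) (by simp)
  have h1 := card_filter_eval_le T _ hP
  have h2 := natDegree_lineSub_le 2 (by decide) 0 0 (x 1) F
  have h3 : #{t ∈ T | p t * w + q t = s w * t + r w ∧ lineSub 1 (p t) (q t) t F = 0} ≤
      #{t ∈ T | (lineSub 2 0 0 (x 1) F).eval t = 0} := by
    apply Finset.card_le_card
    intro t ht
    simp only [Finset.mem_filter] at ht ⊢
    refine ⟨ht.1, ?_⟩
    have h4 := eval_lineSub 1 (p t) (q t) t (x 1) F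
    rw [ht.2.2, Polynomial.eval_zero] at h4
    rw [h4, eval_lineSub]
    exact eval_eq_of_mem_supported F hsup _ _ (by simp) (by simp)
  omega

open MvPolynomial in
/-- If `F` does not divide its flecnode polynomial, the contained lines are common lines of the two
surfaces. If it does, a bad line on which `∂F/∂X₀` does not vanish identically would meet more than
`k` lines with collinear parameters. -/
theorem card_badLines_irreducible_le [Infinite K] (hk1 : 1 ≤ k)
    (hk : ∀ t₀ ∈ T, ∀ t₁ ∈ T, t₀ ≠ t₁ → #{t ∈ T | (t - t₀) * (p t₁ - p t₀) =
      (t₁ - t₀) * (p t - p t₀) ∧ (t - t₀) * (q t₁ - q t₀) = (t₁ - t₀) * (q t - q t₀)} ≤ k)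
    (M : ℕ) (hchar : ∀ j : ℕ, 0 < j → j ≤ M → (j : K) ≠ 0)
    (F : MvPolynomial (Fin 3) K) (hF : Irreducible F) (hM : degreeOf 2 F + degreeOf 0 F ≤ M) :
    #(badLines T W p q s r k F) ≤ 6 * (degreeOf 1 F * degreeOf 0 F) := by
  by_cases hc : degreeOf 0 F = 0
  · rw [badLines_eq_empty T W p q s r k F hF.ne_zero hc]; simp
  by_cases hG : F ∣ flecnode 2 F
  · -- The ruled case: bad lines lie in the singular locus `∂F/∂X₀ = 0`.
    have hne : pderiv 0 F ≠ 0 := pderiv_ne_zero F hc (hchar _ (by omega) (by omega))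
    have hlt := degreeOf_pderiv_lt 0 F (by omega)
    have hnd : ¬ F ∣ pderiv 0 F := by
      rintro ⟨Q, hQ⟩
      have hQ0 : Q ≠ 0 := by rintro rfl; exact hne (by rw [hQ, mul_zero])
      have := degreeOf_mul_eq (n := (0 : Fin 3)) hF.ne_zero hQ0
      rw [← hQ] at this
      omega
    have hrel : IsRelPrime F (pderiv 0 F) := (hF.isRelPrime_iff_not_dvd).2 hnd
    have hb := card_common_lines_le F (pderiv 0 F) hF.ne_zero hrel (Or.inl hc) W s r
    have hsub : badLines T W p q s r k F ⊆ {w ∈ W | lineSub 2 (s w) (r w) w F = 0 ∧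
        lineSub 2 (s w) (r w) w (pderiv 0 F) = 0} := by
      intro w hw
      rw [mem_badLines] at hw
      obtain ⟨hwW, hw0, hw⟩ := hw
      rw [Finset.mem_filter]
      refine ⟨hwW, hw0, ?_⟩
      by_contra hw1
      set S := {t ∈ T | p t * w + q t = s w * t + r w ∧ lineSub 1 (p t) (q t) t F = 0} with hS
      by_cases hex : ∃ t ∈ S, lineSub 1 (p t) (q t) t (pderiv 0 F) ≠ 0
      · obtain ⟨t₀, ht₀, h1⟩ := hex
        obtain ⟨t₁, ht₁, hne'⟩ := Finset.exists_mem_ne (by omega : 1 < #S) t₀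
        have hS0 := (Finset.mem_filter.1 ht₀)
        have hS1 := (Finset.mem_filter.1 ht₁)
        have hdvd := dvd_of_ruled F hF hG (p t₀) (q t₀) t₀ hS0.2.2 h1 M hM hchar
        have : #S ≤ k := by
          refine le_trans (Finset.card_le_card ?_) (hk t₀ hS0.1 t₁ hS1.1 hne'.symm)
          intro t ht
          have hSt := Finset.mem_filter.1 ht
          rw [Finset.mem_filter]
          refine ⟨hSt.1, ?_⟩
          exact collinear_of_dvd F _ _ _ _ _ h1 hdvd _ _ _ _ _ _ hS1.2.2 hSt.2.2
        omega
      · push Not at hex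
        have h1 := card_incident_le T p q (s w) (r w) w (pderiv 0 F) hw1
        have h2 : #S ≤ #{t ∈ T | p t * w + q t = s w * t + r w ∧
            lineSub 1 (p t) (q t) t (pderiv 0 F) = 0} := by
          apply Finset.card_le_card
          intro t ht
          have hSt := Finset.mem_filter.1 ht
          rw [Finset.mem_filter]
          exact ⟨hSt.1, hSt.2.1, hex t ht⟩
        have h3 := degreeOf_pderiv_le 0 2 F
        omega
    have h1 := degreeOf_pderiv_le 0 1 F
    have h2 := Finset.card_le_card hsub
    calc _ ≤ _ := h2.trans hb
      _ ≤ degreeOf 1 F * degreeOf 0 F + degreeOf 0 F * degreeOf 1 F := by gcongr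
      _ ≤ _ := by nlinarith [Nat.zero_le (degreeOf 1 F * degreeOf 0 F)]
  · have hrel : IsRelPrime F (flecnode 2 F) := (hF.isRelPrime_iff_not_dvd).2 hG
    have hb := card_common_lines_le F (flecnode 2 F) hF.ne_zero hrel (Or.inl hc) W s r
    have hsub : badLines T W p q s r k F ⊆ {w ∈ W | lineSub 2 (s w) (r w) w F = 0 ∧
        lineSub 2 (s w) (r w) w (flecnode 2 F) = 0} := by
      intro w hw
      rw [mem_badLines] at hw
      rw [Finset.mem_filter]
      exact ⟨hw.1, hw.2.1, lineSub_flecnode 2 (by decide) _ _ _ F hw.2.1⟩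
    have h1 := degreeOf_flecnode_le 2 1 F
    have h0 := degreeOf_flecnode_le 2 0 F
    calc _ ≤ _ := (Finset.card_le_card hsub).trans hb
      _ ≤ degreeOf 1 F * (3 * degreeOf 0 F) + degreeOf 0 F * (3 * degreeOf 1 F) := by gcongr
      _ = _ := by ring

open MvPolynomial in
/-- A surface contains few bad lines: the bound is additive over coprime factors up to the lines
common to both factors, and irreducible surfaces are covered by `card_badLines_irreducible_le`. -/
theorem card_badLines_le [Infinite K] (hk1 : 1 ≤ k)
    (hk : ∀ t₀ ∈ T, ∀ t₁ ∈ T, t₀ ≠ t₁ → #{t ∈ T | (t - t₀) * (p t₁ - p t₀) =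
      (t₁ - t₀) * (p t - p t₀) ∧ (t - t₀) * (q t₁ - q t₀) = (t₁ - t₀) * (q t - q t₀)} ≤ k)
    (M : ℕ) (hchar : ∀ j : ℕ, 0 < j → j ≤ M → (j : K) ≠ 0)
    (F : MvPolynomial (Fin 3) K) (hF : F ≠ 0) (hM : degreeOf 2 F + degreeOf 0 F ≤ M) :
    #(badLines T W p q s r k F) ≤ 6 * (degreeOf 1 F * degreeOf 0 F) := by
  induction F using UniqueFactorizationMonoid.induction_on_coprime with
  | h0 => exact absurd rfl hF
  | h1 hx =>
    rename_i x
    have : degreeOf 0 x = 0 := by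
      obtain ⟨y, hy⟩ := hx.exists_right_inv
      have hy0 : y ≠ 0 := by rintro rfl; simp at hy
      have := degreeOf_mul_eq (n := (0 : Fin 3)) hF hy0
      rw [hy, degreeOf_one] at this
      omega
    rw [badLines_eq_empty T W p q s r k x hF this]; simp
  | hpr i hp =>
    rename_i f
    rcases Nat.eq_zero_or_pos i with rfl | hi
    · rw [badLines_eq_empty T W p q s r k _ hF (by simp)]; simp
    · have hd : ∀ j, degreeOf j f ≤ degreeOf j (f ^ i) := by
        intro j
        rw [degreeOf_pow_eq _ _ _ hp.ne_zero]
        exact Nat.le_mul_of_pos_left _ hi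
      have hd0 := hd 0
      have hd1 := hd 1
      have hd2 := hd 2
      have hirr := card_badLines_irreducible_le T W p q s r k hk1 hk M hchar f hp.irreducible
        (by omega)
      refine le_trans (Finset.card_le_card ?_) (hirr.trans (by gcongr))
      intro w hw
      rw [mem_badLines] at hw ⊢
      simp only [map_pow, pow_eq_zero_iff (by omega : i ≠ 0)] at hw
      exact ⟨hw.1, hw.2.1, by omega⟩
  | hcp hrel ihx ihy =>
    rename_i x y
    have hx : x ≠ 0 := left_ne_zero_of_mul hF
    have hy : y ≠ 0 := right_ne_zero_of_mul hF
    have e0 := degreeOf_mul_eq (n := (0 : Fin 3)) hx hy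
    have e1 := degreeOf_mul_eq (n := (1 : Fin 3)) hx hy
    have e2 := degreeOf_mul_eq (n := (2 : Fin 3)) hx hy
    by_cases hc : degreeOf 0 (x * y) = 0
    · rw [badLines_eq_empty T W p q s r k _ hF hc]; simp
    have h1 := ihx hx (by omega)
    have h2 := ihy hy (by omega)
    have h3 := card_common_lines_le x y hx hrel (by omega) W s r
    have hsplit : ∀ w, #{t ∈ T | p t * w + q t = s w * t + r w ∧
          lineSub 1 (p t) (q t) t (x * y) = 0} ≤
        #{t ∈ T | p t * w + q t = s w * t + r w ∧ lineSub 1 (p t) (q t) t x = 0} +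
        #{t ∈ T | p t * w + q t = s w * t + r w ∧ lineSub 1 (p t) (q t) t y = 0} := by
      intro w
      refine le_trans (Finset.card_le_card ?_) (Finset.card_union_le _ _)
      intro t ht
      simp only [Finset.mem_filter, Finset.mem_union, map_mul, mul_eq_zero] at ht ⊢
      tauto
    have hsub : badLines T W p q s r k (x * y) ⊆ badLines T W p q s r k x ∪
        (badLines T W p q s r k y ∪ {w ∈ W | lineSub 2 (s w) (r w) w x = 0 ∧
        lineSub 2 (s w) (r w) w y = 0}) := by
      intro w hw
      rw [mem_badLines] at hw
      obtain ⟨hwW, hw0, hw⟩ := hw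
      rw [map_mul, mul_eq_zero] at hw0
      simp only [Finset.mem_union, mem_badLines, Finset.mem_filter]
      have hs := hsplit w
      by_cases hwx : lineSub 2 (s w) (r w) w x = 0
      · by_cases hwy : lineSub 2 (s w) (r w) w y = 0
        · exact Or.inr (Or.inr ⟨hwW, hwx, hwy⟩)
        · left
          have := card_incident_le T p q (s w) (r w) w y hwy
          exact ⟨hwW, hwx, by omega⟩
      · right; left
        have := card_incident_le T p q (s w) (r w) w x hwx
        exact ⟨hwW, hw0.resolve_left hwx, by omega⟩
    have h4 := (Finset.card_le_card hsub).trans ((Finset.card_union_le _ _).trans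
      (Nat.add_le_add_left (Finset.card_union_le _ _) _))
    rw [e0, e1]
    nlinarith [Nat.zero_le (degreeOf 1 x * degreeOf 0 y), Nat.zero_le (degreeOf 1 y * degreeOf 0 x)]

end bad

/-! ### A surface through a family of lines -/

section core

variable {K : Type*} [Field K]

open MvPolynomial in
/-- Counting coefficients: some nonzero polynomial of bounded degrees vanishes on all the lines
`X₀ = p X₁ + q`, `X₂ = t`. -/
theorem exists_vanishing (T : Finset K) (p q : K → K) (a b c : ℕ)
    (h : #T * (b + c - 1) < a * b * c) :
    ∃ F : MvPolynomial (Fin 3) K, F ≠ 0 ∧ degreeOf 2 F < a ∧ degreeOf 1 F < b ∧ degreeOf 0 F < c ∧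
      ∀ t ∈ T, lineSub 1 (p t) (q t) t F = 0 := by
  have habc : 0 < a * b * c := by omega
  have hc : 0 < c := Nat.pos_of_mul_pos_left habc
  have hab : 0 < a * b := Nat.pos_of_mul_pos_right habc
  have hb : 0 < b := Nat.pos_of_mul_pos_left hab
  have ha : 0 < a := Nat.pos_of_mul_pos_right hab
  let e : Fin a × Fin b × Fin c → (Fin 3 →₀ ℕ) := fun x =>
    Finsupp.equivFunOnFinite.symm ![(x.2.2 : ℕ), (x.2.1 : ℕ), (x.1 : ℕ)]
  have he : Function.Injective e := by
    intro x y hxy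
    have h1 := Finsupp.equivFunOnFinite.symm.injective hxy
    have h10 := congrFun h1 0
    have h11 := congrFun h1 1
    have h12 := congrFun h1 2
    simp at h10 h11 h12
    ext
    · exact h12
    · exact h11
    · exact h10
  let Φ : (Fin a × Fin b × Fin c → K) →ₗ[K] MvPolynomial (Fin 3) K :=
    ∑ x, (monomial (e x)).comp (LinearMap.proj x)
  have hΦ : ∀ u, Φ u = ∑ x, monomial (e x) (u x) := by
    intro u
    simp [Φ, LinearMap.sum_apply]
  let Ψ : (Fin a × Fin b × Fin c → K) →ₗ[K] (T × Fin (b + c - 1) → K) :=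
    LinearMap.pi fun y => (Polynomial.lcoeff K y.2).comp
      ((lineSub 1 (p y.1) (q y.1) y.1).toLinearMap.comp Φ)
  have hker : LinearMap.ker Ψ ≠ ⊥ := by
    apply LinearMap.ker_ne_bot_of_finrank_lt
    rw [Module.finrank_fintype_fun_eq_card, Module.finrank_fintype_fun_eq_card]
    simp only [Fintype.card_prod, Fintype.card_fin, Fintype.card_coe]
    rwa [← mul_assoc]
  obtain ⟨u, hu, hu0⟩ := (Submodule.ne_bot_iff _).1 hker
  have hcoeff : ∀ x, coeff (e x) (Φ u) = u x := by
    intro x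
    rw [hΦ, coeff_sum, Finset.sum_eq_single x]
    · simp
    · intro y _ hy
      rw [coeff_monomial, if_neg (fun h => hy (he h))]
    · simp
  have hsupp : ∀ d ∈ (Φ u).support, ∃ x, d = e x := by
    intro d hd
    by_contra hcon
    push Not at hcon
    rw [mem_support_iff, hΦ, coeff_sum] at hd
    apply hd
    apply Finset.sum_eq_zero
    intro x _
    rw [coeff_monomial, if_neg (fun h => hcon x h.symm)]
  have d2 : degreeOf 2 (Φ u) < a := by
    rw [degreeOf_lt_iff ha]
    intro d hd
    obtain ⟨x, rfl⟩ := hsupp d hd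
    simp [e]
  have d1 : degreeOf 1 (Φ u) < b := by
    rw [degreeOf_lt_iff hb]
    intro d hd
    obtain ⟨x, rfl⟩ := hsupp d hd
    simp [e]
  have d0 : degreeOf 0 (Φ u) < c := by
    rw [degreeOf_lt_iff hc]
    intro d hd
    obtain ⟨x, rfl⟩ := hsupp d hd
    simp [e]
  refine ⟨Φ u, ?_, d2, d1, d0, ?_⟩
  · intro h0
    apply hu0
    funext x
    rw [← hcoeff, h0]; simp
  · intro t ht
    ext i
    by_cases hi : i < b + c - 1
    · exact congrFun (LinearMap.mem_ker.1 hu) (⟨t, ht⟩, ⟨i, hi⟩)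
    · rw [Polynomial.coeff_zero]
      apply Polynomial.coeff_eq_zero_of_natDegree_lt
      have := natDegree_lineSub_le 1 (by decide) (p t) (q t) t (Φ u)
      omega

variable [DecidableEq K]

open MvPolynomial in
/-- If every line of `W` met many lines of `T`, a low degree surface through `T` would contain all
of `W`, and too many of its lines would be bad. -/
theorem no_rich_configuration [Infinite K] (T W : Finset K) (p q s r : K → K) (k Q : ℕ)
    (hk1 : 1 ≤ k)
    (hk : ∀ t₀ ∈ T, ∀ t₁ ∈ T, t₀ ≠ t₁ → #{t ∈ T | (t - t₀) * (p t₁ - p t₀) =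
      (t₁ - t₀) * (p t - p t₀) ∧ (t - t₀) * (q t₁ - q t₀) = (t₁ - t₀) * (q t - q t₀)} ≤ k)
    (hchar : ∀ j : ℕ, 0 < j → j ≤ 7 * Q → (j : K) ≠ 0) (hQ : #T < Q ^ 2) (hTW : #T ≤ #W)
    (hW : W.Nonempty)
    (hrich : ∀ w ∈ W, 7 * Q + k + 1 ≤ #{t ∈ T | p t * w + q t = s w * t + r w}) : False := by
  set M := #T with hM
  have hM1 : 1 ≤ M := by
    obtain ⟨w, hw⟩ := hW
    have := hrich w hw
    have h2 := Finset.card_filter_le T (fun t => p t * w + q t = s w * t + r w)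
    omega
  obtain ⟨n, hn⟩ : ∃ n, n = Nat.sqrt (M / 7) := ⟨_, rfl⟩
  have hn1 : 7 * (n * n) ≤ M := by
    have := Nat.sqrt_le (M / 7)
    rw [← hn] at this
    omega
  have hn2 : M < 7 * ((n + 1) * (n + 1)) := by
    have := Nat.lt_succ_sqrt (M / 7)
    rw [← hn, Nat.succ_eq_add_one] at this
    omega
  obtain ⟨a, ha⟩ : ∃ a, a = 2 * M / (n + 1) := ⟨_, rfl⟩
  have ha1 : 2 * M < (a + 1) * (n + 1) := by
    have h1 := Nat.div_add_mod (2 * M) (n + 1)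
    have h2 := Nat.mod_lt (2 * M) (Nat.succ_pos n)
    rw [← ha] at h1
    nlinarith
  have ha2 : a * (n + 1) ≤ 2 * M := by rw [ha]; exact Nat.div_mul_le_self _ _
  obtain ⟨F, hF, d2, d1, d0, hv⟩ := exists_vanishing T p q (a + 1) (n + 1) (n + 1) (by
    rw [← hM]
    have : n + 1 + (n + 1) - 1 = 2 * n + 1 := by omega
    rw [this]
    nlinarith)
  have hnQ : n ≤ Q := by
    by_contra hcon
    push Not at hcon
    nlinarith
  have haQ : a ≤ 6 * Q := by
    by_contra hcon
    push Not at hcon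
    have h1 : 6 * Q * (n + 1) < 2 * M := lt_of_lt_of_le (by gcongr) ha2
    have h2 : 3 * (Q * (n + 1)) < M := by nlinarith
    have h3 : (3 * (Q * (n + 1))) * (3 * (Q * (n + 1))) < M * M :=
      Nat.mul_self_lt_mul_self h2
    have h4 : M * M ≤ Q ^ 2 * (7 * ((n + 1) * (n + 1))) := Nat.mul_le_mul hQ.le hn2.le
    nlinarith [Nat.zero_le (Q ^ 2 * ((n + 1) * (n + 1)))]
  have hdeg : degreeOf 2 F + degreeOf 0 F ≤ 7 * Q := by omega
  have hset : ∀ w, {t ∈ T | p t * w + q t = s w * t + r w ∧ lineSub 1 (p t) (q t) t F = 0} =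
      {t ∈ T | p t * w + q t = s w * t + r w} := by
    intro w
    apply Finset.filter_congr
    intro t ht
    simp [hv t ht]
  have hall : W ⊆ badLines T W p q s r k F := by
    intro w hw
    rw [mem_badLines, hset]
    have hr := hrich w hw
    refine ⟨hw, ?_, by omega⟩
    by_contra hne
    have := card_incident_le T p q (s w) (r w) w F hne
    rw [hset] at this
    omega
  have hbad := card_badLines_le T W p q s r k hk1 hk (7 * Q) hchar F hF hdeg
  have h1 := Finset.card_le_card hall
  have h2 : degreeOf 1 F * degreeOf 0 F ≤ n * n := Nat.mul_le_mul (by omega) (by omega)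
  have h3 : #W ≤ 6 * (n * n) := by omega
  omega
end core

/-! ### Incidences between two families of lines -/

section incidence

variable {K : Type*} [Field K] [DecidableEq K]

/-- Incidence bound for two families of lines in general position, by successive deletion of lines
with few incidences. -/
theorem card_line_incidences_le [Infinite K] (p q s r : K → K) (k Q : ℕ) (hk1 : 1 ≤ k)
    (hchar : ∀ j : ℕ, 0 < j → j ≤ 7 * Q → (j : K) ≠ 0) (T W : Finset K)
    (hT : ∀ t₀ ∈ T, ∀ t₁ ∈ T, t₀ ≠ t₁ → #{t ∈ T | (t - t₀) * (p t₁ - p t₀) =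
      (t₁ - t₀) * (p t - p t₀) ∧ (t - t₀) * (q t₁ - q t₀) = (t₁ - t₀) * (q t - q t₀)} ≤ k)
    (hW : ∀ t₀ ∈ W, ∀ t₁ ∈ W, t₀ ≠ t₁ → #{t ∈ W | (t - t₀) * (s t₁ - s t₀) =
      (t₁ - t₀) * (s t - s t₀) ∧ (t - t₀) * (r t₁ - r t₀) = (t₁ - t₀) * (r t - r t₀)} ≤ k)
    (hTQ : #T < Q ^ 2) (hWQ : #W < Q ^ 2) :
    #{x ∈ T ×ˢ W | p x.1 * x.2 + q x.1 = s x.2 * x.1 + r x.2} ≤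
      (7 * Q + k + 1) * (#T + #W) := by
  induction hn : #T + #W using Nat.strong_induction_on generalizing T W with
  | _ n ih =>
  by_cases h1 : ∃ w ∈ W, #{t ∈ T | p t * w + q t = s w * t + r w} < 7 * Q + k + 1
  · obtain ⟨w, hw, hlt⟩ := h1
    have hcard := Finset.card_erase_of_mem hw
    have hpos : 0 < #W := Finset.card_pos.2 ⟨w, hw⟩
    have := ih (n - 1) (by omega) T (W.erase w) hT
      (fun t₀ h0 t₁ h1 hne => (Finset.card_le_card (Finset.filter_subset_filter _
        (Finset.erase_subset _ _))).trans (hW t₀ (Finset.mem_of_mem_erase h0) t₁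
          (Finset.mem_of_mem_erase h1) hne)) hTQ (by omega) (by omega)
    have hsub : {x ∈ T ×ˢ W | p x.1 * x.2 + q x.1 = s x.2 * x.1 + r x.2} ⊆
        {x ∈ T ×ˢ (W.erase w) | p x.1 * x.2 + q x.1 = s x.2 * x.1 + r x.2} ∪
        {t ∈ T | p t * w + q t = s w * t + r w}.image (fun t => (t, w)) := by
      rintro ⟨t, w'⟩ hx
      simp only [Finset.mem_filter, Finset.mem_product, Finset.mem_union, Finset.mem_image,
        Finset.mem_erase] at hx ⊢
      by_cases hww : w' = w
      · subst hww; exact Or.inr ⟨t, ⟨hx.1.1, hx.2⟩, rfl⟩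
      · exact Or.inl ⟨⟨hx.1.1, hww, hx.1.2⟩, hx.2⟩
    have h2 := (Finset.card_le_card hsub).trans ((Finset.card_union_le _ _).trans
      (Nat.add_le_add_left Finset.card_image_le _))
    have h3 : (7 * Q + k + 1) * n = (7 * Q + k + 1) * (n - 1) + (7 * Q + k + 1) := by
      rw [← Nat.mul_succ]; congr 1; omega
    omega
  by_cases h2 : ∃ t ∈ T, #{w ∈ W | s w * t + r w = p t * w + q t} < 7 * Q + k + 1
  · obtain ⟨t, ht, hlt⟩ := h2
    have hcard := Finset.card_erase_of_mem ht
    have hpos : 0 < #T := Finset.card_pos.2 ⟨t, ht⟩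
    have := ih (n - 1) (by omega) (T.erase t) W
      (fun t₀ h0 t₁ h1 hne => (Finset.card_le_card (Finset.filter_subset_filter _
        (Finset.erase_subset _ _))).trans (hT t₀ (Finset.mem_of_mem_erase h0) t₁
          (Finset.mem_of_mem_erase h1) hne)) hW (by omega) hWQ (by omega)
    have hsub : {x ∈ T ×ˢ W | p x.1 * x.2 + q x.1 = s x.2 * x.1 + r x.2} ⊆
        {x ∈ (T.erase t) ×ˢ W | p x.1 * x.2 + q x.1 = s x.2 * x.1 + r x.2} ∪
        {w ∈ W | s w * t + r w = p t * w + q t}.image (fun w => (t, w)) := by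
      rintro ⟨t', w⟩ hx
      simp only [Finset.mem_filter, Finset.mem_product, Finset.mem_union, Finset.mem_image,
        Finset.mem_erase] at hx ⊢
      by_cases htt : t' = t
      · subst htt; exact Or.inr ⟨w, ⟨hx.1.2, hx.2.symm⟩, rfl⟩
      · exact Or.inl ⟨⟨⟨htt, hx.1.1⟩, hx.1.2⟩, hx.2⟩
    have h2 := (Finset.card_le_card hsub).trans ((Finset.card_union_le _ _).trans
      (Nat.add_le_add_left Finset.card_image_le _))
    have h3 : (7 * Q + k + 1) * n = (7 * Q + k + 1) * (n - 1) + (7 * Q + k + 1) := by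
      rw [← Nat.mul_succ]; congr 1; omega
    omega
  push Not at h1 h2
  rcases W.eq_empty_or_nonempty with rfl | hWne
  · simp
  rcases T.eq_empty_or_nonempty with rfl | hTne
  · simp
  exfalso
  rcases le_total #T #W with hle | hle
  · exact no_rich_configuration T W p q s r k Q hk1 hT hchar hTQ hle hWne h1
  · exact no_rich_configuration W T s r p q k Q hk1 hW hchar hWQ hle hTne h2

end incidence

/-! ### Incidences between points and planes -/

section pointPlane

variable {K : Type*} [Field K]

/-- At most `k` points of `P` lie on any line of affine 3-space. -/
def LinesBounded (P : Finset (K × K × K)) (k : ℕ) : Prop :=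
  ∀ x ∈ P, ∀ y ∈ P, x ≠ y → ∀ S ⊆ P, (∀ z ∈ S, ∃ B : K, z = x + B • (y - x)) → #S ≤ k

/-- Projective maps preserve collinearity: `D₀, D₁, D` are the denominators. -/
theorem collinear_transfer (t₀ p₀ q₀ D₀ t₁ p₁ q₁ D₁ t p q D : K) (h0 : D₀ ≠ 0) (h1 : D₁ ≠ 0)
    (h : D ≠ 0) (a b d : K) (hd : D = 1 + d * p) (hd0 : D₀ = 1 + d * p₀) (hd1 : D₁ = 1 + d * p₁)
    (hne : (t₁ + a * p₁ + b * q₁) / D₁ ≠ (t₀ + a * p₀ + b * q₀) / D₀)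
    (e1 : ((t + a * p + b * q) / D - (t₀ + a * p₀ + b * q₀) / D₀) * (p₁ / D₁ - p₀ / D₀) =
      ((t₁ + a * p₁ + b * q₁) / D₁ - (t₀ + a * p₀ + b * q₀) / D₀) * (p / D - p₀ / D₀))
    (e2 : ((t + a * p + b * q) / D - (t₀ + a * p₀ + b * q₀) / D₀) * (q₁ / D₁ - q₀ / D₀) =
      ((t₁ + a * p₁ + b * q₁) / D₁ - (t₀ + a * p₀ + b * q₀) / D₀) * (q / D - q₀ / D₀)) :
    ∃ B : K, (t, p, q) = (t₀, p₀, q₀) + B • ((t₁, p₁, q₁) - (t₀, p₀, q₀)) := by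
  have hne' := sub_ne_zero.2 hne
  obtain ⟨A, hA⟩ : ∃ A, (t + a * p + b * q) / D - (t₀ + a * p₀ + b * q₀) / D₀ =
      A * ((t₁ + a * p₁ + b * q₁) / D₁ - (t₀ + a * p₀ + b * q₀) / D₀) :=
    ⟨_, (div_mul_cancel₀ _ hne').symm⟩
  rw [hA] at e1 e2
  have f1 : p / D - p₀ / D₀ = A * (p₁ / D₁ - p₀ / D₀) := by
    apply mul_left_cancel₀ hne'
    linear_combination -e1
  have f2 : q / D - q₀ / D₀ = A * (q₁ / D₁ - q₀ / D₀) := by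
    apply mul_left_cancel₀ hne'
    linear_combination -e2
  -- The reciprocals of the denominators are affine functions of the new coordinates.
  have g : 1 / D = 1 - d * (p / D) := by field_simp; rw [hd]; ring
  have g0 : 1 / D₀ = 1 - d * (p₀ / D₀) := by field_simp; rw [hd0]; ring
  have g1 : 1 / D₁ = 1 - d * (p₁ / D₁) := by field_simp; rw [hd1]; ring
  have f3 : 1 / D - 1 / D₀ = A * (1 / D₁ - 1 / D₀) := by
    rw [g, g0, g1]; linear_combination -d * f1
  have f4 : t / D - t₀ / D₀ = A * (t₁ / D₁ - t₀ / D₀) := by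
    have : ∀ t p q D : K, (t + a * p + b * q) / D =
        t / D + a * (p / D) + b * (q / D) := by intros; ring
    simp only [this] at hA
    linear_combination hA - a * f1 - b * f2
  have fin : ∀ u u₀ u₁ : K, u / D - u₀ / D₀ = A * (u₁ / D₁ - u₀ / D₀) →
      u = u₀ + (A * D / D₁) * (u₁ - u₀) := by
    intro u u₀ u₁ hu
    have h2 : u = D * (u / D) := by field_simp
    have h3 : u / D = u₀ / D₀ + A * (u₁ / D₁ - u₀ / D₀) := by linear_combination hu
    have h4 : D * (1 / D₀ + A * (1 / D₁ - 1 / D₀)) = 1 := by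
      rw [← f3]; field_simp; ring
    rw [h2, h3]
    have e5 : D * (u₀ / D₀ + A * (u₁ / D₁ - u₀ / D₀)) =
      u₀ * (D * (1 / D₀ + A * (1 / D₁ - 1 / D₀))) + (A * D / D₁) * (u₁ - u₀) := by ring
    rw [e5, h4, mul_one]
  refine ⟨A * D / D₁, ?_⟩
  simp only [Prod.mk_sub_mk, Prod.smul_mk, Prod.mk_add_mk, smul_eq_mul, Prod.mk.injEq]
  exact ⟨fin _ _ _ f4, fin _ _ _ f1, fin _ _ _ f2⟩

open Polynomial in
/-- A generic parameter `ξ` making the two projective changes of coordinates below well defined and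
the first coordinates of all points and of all planes distinct. -/
theorem exists_generic [Infinite K] (P R : Finset (K × K × K)) :
    ∃ ξ : K, (∀ x ∈ P, 1 - ξ ^ 3 * x.2.1 ≠ 0) ∧ (∀ y ∈ R, 1 + ξ ^ 2 * y.2.1 ≠ 0) ∧
      (∀ x ∈ P, ∀ x' ∈ P, x ≠ x' →
        (x.1 + ξ * x.2.1 + ξ ^ 2 * x.2.2) * (1 - ξ ^ 3 * x'.2.1) -
        (x'.1 + ξ * x'.2.1 + ξ ^ 2 * x'.2.2) * (1 - ξ ^ 3 * x.2.1) ≠ 0) ∧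
      (∀ y ∈ R, ∀ y' ∈ R, y ≠ y' →
        (y.1 + ξ * y.2.1 - ξ ^ 3 * y.2.2) * (1 + ξ ^ 2 * y'.2.1) -
        (y'.1 + ξ * y'.2.1 - ξ ^ 3 * y'.2.2) * (1 + ξ ^ 2 * y.2.1) ≠ 0) := by
  let A : K × K × K → K[X] := fun x => 1 - X ^ 3 * C x.2.1
  let A' : K × K × K → K[X] := fun y => 1 + X ^ 2 * C y.2.1
  let B : (K × K × K) × (K × K × K) → K[X] := fun u =>
    (C u.1.1 + X * C u.1.2.1 + X ^ 2 * C u.1.2.2) * A u.2 -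
      (C u.2.1 + X * C u.2.2.1 + X ^ 2 * C u.2.2.2) * A u.1
  let B' : (K × K × K) × (K × K × K) → K[X] := fun u =>
    (C u.1.1 + X * C u.1.2.1 - X ^ 3 * C u.1.2.2) * A' u.2 -
      (C u.2.1 + X * C u.2.2.1 - X ^ 3 * C u.2.2.2) * A' u.1
  have hA : ∀ x, A x ≠ 0 := by
    intro x h
    have := congrArg (eval 0) h
    simp [A] at this
  have hA' : ∀ x, A' x ≠ 0 := by
    intro x h
    have := congrArg (eval 0) h
    simp [A'] at this
  have hB : ∀ u, u.1 ≠ u.2 → B u ≠ 0 := by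
    rintro ⟨⟨t, p, q⟩, ⟨t', p', q'⟩⟩ hne h
    have e : B ((t, p, q), (t', p', q')) = C (t - t') + C (p - p') * X + C (q - q') * X ^ 2 +
        C (t' * p - t * p') * X ^ 3 + C (q' * p - q * p') * X ^ 5 := by
      simp only [A, B, C_sub, C_mul]; ring
    rw [e] at h
    have h0 := congrArg (fun f => coeff f 0) h
    have h1 := congrArg (fun f => coeff f 1) h
    have h2 := congrArg (fun f => coeff f 2) h
    simp [-map_sub, -map_mul, coeff_X, coeff_C, coeff_X_pow] at h0 h1 h2
    apply hne
    rw [sub_eq_zero.1 h0, sub_eq_zero.1 h1, sub_eq_zero.1 h2]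
  have hB' : ∀ u, u.1 ≠ u.2 → B' u ≠ 0 := by
    rintro ⟨⟨t, p, q⟩, ⟨t', p', q'⟩⟩ hne h
    have e : B' ((t, p, q), (t', p', q')) = C (t - t') + C (p - p') * X +
        C (t * p' - t' * p) * X ^ 2 +
        C (q' - q) * X ^ 3 + C (q' * p - q * p') * X ^ 5 := by
      simp only [A', B', C_sub, C_mul]; ring
    rw [e] at h
    have h0 := congrArg (fun f => coeff f 0) h
    have h1 := congrArg (fun f => coeff f 1) h
    have h2 := congrArg (fun f => coeff f 3) h
    simp [-map_sub, -map_mul, coeff_X, coeff_C, coeff_X_pow] at h0 h1 h2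
    apply hne
    rw [sub_eq_zero.1 h0, sub_eq_zero.1 h1, (sub_eq_zero.1 h2).symm]
  have hprod : (∏ x ∈ P, A x) * (∏ y ∈ R, A' y) * (∏ u ∈ P.offDiag, B u) *
      (∏ u ∈ R.offDiag, B' u) ≠ 0 := by
    refine mul_ne_zero (mul_ne_zero (mul_ne_zero ?_ ?_) ?_) ?_ <;> rw [Finset.prod_ne_zero_iff]
    · exact fun x _ => hA x
    · exact fun x _ => hA' x
    · exact fun u hu => hB u (Finset.mem_offDiag.1 hu).2.2
    · exact fun u hu => hB' u (Finset.mem_offDiag.1 hu).2.2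
  obtain ⟨ξ, hξ⟩ : ∃ ξ, eval ξ ((∏ x ∈ P, A x) * (∏ y ∈ R, A' y) * (∏ u ∈ P.offDiag, B u) *
      (∏ u ∈ R.offDiag, B' u)) ≠ 0 := by
    by_contra hcon
    push Not at hcon
    exact hprod (Polynomial.funext (by simpa using hcon))
  rw [eval_mul, eval_mul, eval_mul, eval_prod, eval_prod, eval_prod, eval_prod] at hξ
  have h4 := Finset.prod_ne_zero_iff.1 (right_ne_zero_of_mul hξ)
  have h3 := Finset.prod_ne_zero_iff.1 (right_ne_zero_of_mul (left_ne_zero_of_mul hξ))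
  have h2 := Finset.prod_ne_zero_iff.1
    (right_ne_zero_of_mul (left_ne_zero_of_mul (left_ne_zero_of_mul hξ)))
  have h1 := Finset.prod_ne_zero_iff.1
    (left_ne_zero_of_mul (left_ne_zero_of_mul (left_ne_zero_of_mul hξ)))
  refine ⟨ξ, fun x hx => ?_, fun x hx => ?_, fun x hx y hy hne => ?_, fun x hx y hy hne => ?_⟩
  · simpa only [A, A', B, B', eval_sub, eval_add, eval_mul, eval_pow, eval_X, eval_C, eval_one]
      using h1 x hx
  · simpa only [A, A', B, B', eval_sub, eval_add, eval_mul, eval_pow, eval_X, eval_C, eval_one]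
      using h2 x hx
  · simpa only [A, A', B, B', eval_sub, eval_add, eval_mul, eval_pow, eval_X, eval_C, eval_one]
      using h3 (x, y) (Finset.mem_offDiag.2 ⟨hx, hy, hne⟩)
  · simpa only [A, A', B, B', eval_sub, eval_add, eval_mul, eval_pow, eval_X, eval_C, eval_one]
      using h4 (x, y) (Finset.mem_offDiag.2 ⟨hx, hy, hne⟩)

variable [DecidableEq K]

/-- Point-plane incidence bound: `(t, p, q)` is a point, and `(w, s, r)` stands for the plane
`p w + q = s t + r`. A generic projective change of coordinates turns points and planes into the two
families of lines of `card_line_incidences_le`, each line being determined by one coordinate. -/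
theorem card_incidences_le [Infinite K] (P R : Finset (K × K × K)) (k Q : ℕ) (hk1 : 1 ≤ k)
    (hP : LinesBounded P k) (hR : LinesBounded R k)
    (hchar : ∀ j : ℕ, 0 < j → j ≤ 7 * Q → (j : K) ≠ 0) (hPQ : #P < Q ^ 2) (hRQ : #R < Q ^ 2) :
    #{u ∈ P ×ˢ R | u.1.2.1 * u.2.1 + u.1.2.2 = u.2.2.1 * u.1.1 + u.2.2.2} ≤
      (7 * Q + k + 1) * (#P + #R) := by
  obtain ⟨ξ, hP0, hR0, hPi, hRi⟩ := exists_generic P R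
  set f : K × K × K → K := fun x =>
    (x.1 + ξ * x.2.1 + ξ ^ 2 * x.2.2) / (1 - ξ ^ 3 * x.2.1) with hf
  set f' : K × K × K → K := fun y =>
    (y.1 + ξ * y.2.1 - ξ ^ 3 * y.2.2) / (1 + ξ ^ 2 * y.2.1) with hf'
  have finj : Set.InjOn f P := by
    intro x hx y hy hxy
    by_contra hne
    apply hPi x hx y hy hne
    rw [hf] at hxy
    simp only at hxy
    rw [div_eq_div_iff (hP0 x hx) (hP0 y hy)] at hxy
    linear_combination hxy
  have finj' : Set.InjOn f' R := by
    intro x hx y hy hxy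
    by_contra hne
    apply hRi x hx y hy hne
    rw [hf'] at hxy
    simp only at hxy
    rw [div_eq_div_iff (hR0 x hx) (hR0 y hy)] at hxy
    linear_combination hxy
  set g := Function.invFunOn f P with hg
  set g' := Function.invFunOn f' R with hg'
  have hgf : ∀ x ∈ P, g (f x) = x := fun x hx => finj.leftInvOn_invFunOn hx
  have hgf' : ∀ x ∈ R, g' (f' x) = x := fun x hx => finj'.leftInvOn_invFunOn hx
  set p : K → K := fun t => (g t).2.1 / (1 - ξ ^ 3 * (g t).2.1) with hp
  set q : K → K := fun t => (g t).2.2 / (1 - ξ ^ 3 * (g t).2.1) with hq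
  set s : K → K := fun w => (g' w).2.1 / (1 + ξ ^ 2 * (g' w).2.1) with hs
  set r : K → K := fun w => (g' w).2.2 / (1 + ξ ^ 2 * (g' w).2.1) with hr
  have cP : #(P.image f) = #P := Finset.card_image_of_injOn finj
  have cR : #(R.image f') = #R := Finset.card_image_of_injOn finj'
  have hT : ∀ t₀ ∈ P.image f, ∀ t₁ ∈ P.image f, t₀ ≠ t₁ →
      #{t ∈ P.image f | (t - t₀) * (p t₁ - p t₀) =
      (t₁ - t₀) * (p t - p t₀) ∧ (t - t₀) * (q t₁ - q t₀) = (t₁ - t₀) * (q t - q t₀)} ≤ k := by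
    intro t₀ h0 t₁ h1 hne
    obtain ⟨x₀, hx₀, rfl⟩ := Finset.mem_image.1 h0
    obtain ⟨x₁, hx₁, rfl⟩ := Finset.mem_image.1 h1
    have hne' : x₀ ≠ x₁ := fun h => hne (by rw [h])
    rw [Finset.filter_image]
    refine Finset.card_image_le.trans (hP x₀ hx₀ x₁ hx₁ hne' _ (Finset.filter_subset _ _) ?_)
    intro x hx
    rw [Finset.mem_filter] at hx
    obtain ⟨hx, e1, e2⟩ := hx
    simp only [hp, hq, hgf x hx, hgf x₀ hx₀, hgf x₁ hx₁] at e1 e2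
    exact collinear_transfer _ _ _ _ _ _ _ _ _ _ _ _ (hP0 x₀ hx₀) (hP0 x₁ hx₁) (hP0 x hx)
      ξ (ξ ^ 2) (-ξ ^ 3) (by ring) (by ring) (by ring) (fun h => hne h.symm) e1 e2
  have hW : ∀ t₀ ∈ R.image f', ∀ t₁ ∈ R.image f', t₀ ≠ t₁ →
      #{t ∈ R.image f' | (t - t₀) * (s t₁ - s t₀) =
      (t₁ - t₀) * (s t - s t₀) ∧ (t - t₀) * (r t₁ - r t₀) = (t₁ - t₀) * (r t - r t₀)} ≤ k := by
    intro t₀ h0 t₁ h1 hne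
    obtain ⟨x₀, hx₀, rfl⟩ := Finset.mem_image.1 h0
    obtain ⟨x₁, hx₁, rfl⟩ := Finset.mem_image.1 h1
    have hne' : x₀ ≠ x₁ := fun h => hne (by rw [h])
    rw [Finset.filter_image]
    refine Finset.card_image_le.trans (hR x₀ hx₀ x₁ hx₁ hne' _ (Finset.filter_subset _ _) ?_)
    intro x hx
    rw [Finset.mem_filter] at hx
    obtain ⟨hx, e1, e2⟩ := hx
    simp only [hs, hr, hgf' x hx, hgf' x₀ hx₀, hgf' x₁ hx₁] at e1 e2
    have hsub : ∀ y : K × K × K, f' y =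
        (y.1 + ξ * y.2.1 + (-ξ ^ 3) * y.2.2) / (1 + ξ ^ 2 * y.2.1) := by
      intro y; rw [hf']; ring
    simp only [hsub] at e1 e2 hne
    exact collinear_transfer _ _ _ _ _ _ _ _ _ _ _ _ (hR0 x₀ hx₀) (hR0 x₁ hx₁) (hR0 x hx)
      ξ (-ξ ^ 3) (ξ ^ 2) (by ring) (by ring) (by ring) (fun h => hne h.symm) e1 e2
  have main := card_line_incidences_le p q s r k Q hk1 hchar (P.image f) (R.image f') hT hW
    (by rwa [cP]) (by rwa [cR])
  rw [cP, cR] at main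
  refine le_trans (Finset.card_le_card_of_injOn (fun u => (f u.1, f' u.2)) ?_ ?_) main
  · rintro ⟨x, y⟩ hu
    simp only [Finset.coe_filter, Finset.mem_product, Set.mem_ofPred_eq] at hu ⊢
    obtain ⟨⟨hx, hy⟩, hinc⟩ := hu
    refine ⟨⟨Finset.mem_image_of_mem _ hx, Finset.mem_image_of_mem _ hy⟩, ?_⟩
    simp only [hp, hq, hs, hr, hgf x hx, hgf' y hy]
    simp only [hf, hf']
    have d1 := hP0 x hx
    have d2 := hR0 y hy
    rw [← sub_eq_zero]
    have : x.2.1 / (1 - ξ ^ 3 * x.2.1) * ((y.1 + ξ * y.2.1 - ξ ^ 3 * y.2.2) / (1 + ξ ^ 2 * y.2.1)) +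
        x.2.2 / (1 - ξ ^ 3 * x.2.1) -
        (y.2.1 / (1 + ξ ^ 2 * y.2.1) * ((x.1 + ξ * x.2.1 + ξ ^ 2 * x.2.2) / (1 - ξ ^ 3 * x.2.1)) +
          y.2.2 / (1 + ξ ^ 2 * y.2.1)) =
        (x.2.1 * y.1 + x.2.2 - (y.2.1 * x.1 + y.2.2)) /
          ((1 - ξ ^ 3 * x.2.1) * (1 + ξ ^ 2 * y.2.1)) := by
      generalize hD : 1 - ξ ^ 3 * x.2.1 = D at d1 ⊢
      generalize hE : 1 + ξ ^ 2 * y.2.1 = E at d2 ⊢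
      field_simp
      rw [← hD, ← hE]
      ring
    rw [this, hinc, sub_self, zero_div]
  · rintro ⟨x, y⟩ hu ⟨x', y'⟩ hu' h
    simp only [Finset.coe_filter, Finset.mem_product, Set.mem_ofPred_eq] at hu hu'
    simp only [Prod.mk.injEq] at h ⊢
    exact ⟨finj hu.1.1 hu'.1.1 h.1, finj' hu.1.2 hu'.1.2 h.2⟩

end pointPlane

/-! ### An energy bound from point-plane incidences -/

section sextuples

variable {F : Type*} [Field F]

/-- For a line meeting the product set, one of the three coordinates `c`, `z`, `x` determines the
position on the line. -/
theorem linesBounded_image {K : Type*} [Field K] [DecidableEq K] (φ : F →+* K)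
    (C X Z : Finset F) (δ : F) (k : ℕ)
    (hC : #C ≤ k) (hX : #X ≤ k) (hZk : #Z ≤ k) :
    LinesBounded ((C ×ˢ X ×ˢ Z).image
      (fun v => (φ (δ * v.1), φ (δ * (v.2.2 * v.2.1)), φ v.2.2))) k := by
  intro x hx y hy hne S hS hline
  have mem : ∀ z ∈ S, ∃ c ∈ C, ∃ a ∈ X, ∃ w ∈ Z, (φ (δ * c), φ (δ * (w * a)), φ w) = z := by
    intro z hz
    obtain ⟨v, hv, h⟩ := Finset.mem_image.1 (hS hz)
    simp only [Finset.mem_product] at hv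
    exact ⟨v.1, hv.1, v.2.1, hv.2.1, v.2.2, hv.2.2, h⟩
  -- A coordinate that differs at `x` and `y` determines the position on the line.
  have inj : ∀ z ∈ S, ∀ z' ∈ S, ((x.1 ≠ y.1 ∧ z.1 = z'.1) ∨ (x.2.2 ≠ y.2.2 ∧ z.2.2 = z'.2.2) ∨
      (x.2.1 ≠ y.2.1 ∧ z.2.1 = z'.2.1)) → z = z' := by
    intro z hz z' hz' h
    obtain ⟨B, rfl⟩ := hline z hz
    obtain ⟨B', rfl⟩ := hline z' hz'
    suffices B = B' by rw [this]
    simp only [Prod.fst_add, Prod.snd_add, Prod.smul_fst, Prod.smul_snd, Prod.fst_sub,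
      Prod.snd_sub, smul_eq_mul, add_right_inj] at h
    rcases h with ⟨h, h'⟩ | ⟨h, h'⟩ | ⟨h, h'⟩ <;>
      exact mul_right_cancel₀ (sub_ne_zero.2 (Ne.symm h)) h'
  by_cases h1 : x.1 = y.1
  · by_cases h2 : x.2.2 = y.2.2
    · have h3 : x.2.1 ≠ y.2.1 := fun h3 => hne (Prod.ext h1 (Prod.ext h3 h2))
      refine le_trans (Finset.card_le_card_of_injOn (t := X.image (fun a => φ δ * (x.2.2 * φ a)))
        (fun z => z.2.1) ?_ ?_) (Finset.card_image_le.trans hX)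
      · intro z hz
        obtain ⟨c, hc, a, ha, w, hw, e⟩ := mem z hz
        obtain ⟨B, hB⟩ := hline z hz
        have hw' : z.2.2 = x.2.2 := by
          rw [hB]; simp [h2]
        refine Finset.mem_image.2 ⟨a, ha, ?_⟩
        rw [← hw', ← e]
        simp only [map_mul]
      · intro z hz z' hz' h
        exact inj z hz z' hz' (Or.inr (Or.inr ⟨h3, h⟩))
    · refine le_trans (Finset.card_le_card_of_injOn (t := Z.image φ)
        (fun z => z.2.2) ?_ ?_) (Finset.card_image_le.trans hZk)
      · intro z hz
        obtain ⟨c, hc, a, ha, w, hw, rfl⟩ := mem z hz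
        exact Finset.mem_image_of_mem _ hw
      · intro z hz z' hz' h
        exact inj z hz z' hz' (Or.inr (Or.inl ⟨h2, h⟩))
  · refine le_trans (Finset.card_le_card_of_injOn (t := C.image (fun c => φ (δ * c)))
      (fun z => z.1) ?_ ?_) (Finset.card_image_le.trans hC)
    · intro z hz
      obtain ⟨c, hc, a, ha, w, hw, rfl⟩ := mem z hz
      exact Finset.mem_image_of_mem _ hc
    · intro z hz z' hz' h
      exact inj z hz z' hz' (Or.inl ⟨h1, h⟩)

variable [DecidableEq F]

/-- The energy of the family `(c, x, z) ↦ (x c + ε) / z`, by point-plane incidences over an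
algebraic closure: the point carries `c, x', z` and the plane carries `c', x, z'`. -/
theorem card_sextuples_le (C X Z : Finset F) (hZ : (0 : F) ∉ Z) (ε : F) (hε : ε * ε = 1)
    (k Q : ℕ) (hk1 : 1 ≤ k) (hC : #C ≤ k) (hX : #X ≤ k) (hZk : #Z ≤ k)
    (hchar : ∀ j : ℕ, 0 < j → j ≤ 7 * Q → (j : F) ≠ 0) (hN : #C * #X * #Z < Q ^ 2) :
    #{u ∈ (C ×ˢ X ×ˢ Z) ×ˢ (C ×ˢ X ×ˢ Z) |
      u.2.2.2 * (u.1.2.1 * u.1.1 + ε) = u.1.2.2 * (u.2.2.1 * u.2.1 + ε)} ≤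
      (7 * Q + k + 1) * (2 * (#C * #X * #Z)) := by
  classical
  let φ : F →+* AlgebraicClosure F := algebraMap F (AlgebraicClosure F)
  have φi : Function.Injective φ := φ.injective
  have hε0 : ε ≠ 0 := fun h => by simp [h] at hε
  set P := (C ×ˢ X ×ˢ Z).image
      (fun v => (φ (1 * v.1), φ (1 * (v.2.2 * v.2.1)), φ v.2.2)) with hP
  set R := (C ×ˢ X ×ˢ Z).image
      (fun v => (φ (ε * v.1), φ (ε * (v.2.2 * v.2.1)), φ v.2.2)) with hR
  have cP : #P ≤ #C * #X * #Z := by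
    refine Finset.card_image_le.trans ?_
    rw [Finset.card_product, Finset.card_product, mul_assoc]
  have cR : #R ≤ #C * #X * #Z := by
    refine Finset.card_image_le.trans ?_
    rw [Finset.card_product, Finset.card_product, mul_assoc]
  have main := card_incidences_le P R k Q hk1
    (linesBounded_image φ C X Z 1 k hC hX hZk)
    (linesBounded_image φ C X Z ε k hC hX hZk)
    (fun j h0 hj h => hchar j h0 hj (φi (by rw [map_natCast, map_zero, h])))
    (cP.trans_lt hN) (cR.trans_lt hN)
  refine le_trans ?_ (main.trans (Nat.mul_le_mul_left _ (by omega)))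
  refine Finset.card_le_card_of_injOn (fun u =>
    ((φ (1 * u.1.1), φ (1 * (u.1.2.2 * u.2.2.1)), φ u.1.2.2),
     (φ (ε * u.2.1), φ (ε * (u.2.2.2 * u.1.2.1)), φ u.2.2.2))) ?_ ?_
  · rintro ⟨⟨c, x, z⟩, ⟨c', x', z'⟩⟩ hu
    simp only [Finset.coe_filter, Finset.mem_product, Set.mem_ofPred_eq] at hu ⊢
    obtain ⟨⟨⟨hc, hx, hz⟩, hc', hx', hz'⟩, e⟩ := hu
    refine ⟨⟨Finset.mem_image.2 ⟨(c, x', z), by simp [hc, hx', hz], rfl⟩,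
      Finset.mem_image.2 ⟨(c', x, z'), by simp [hc', hx, hz'], rfl⟩⟩, ?_⟩
    rw [← map_mul, ← map_mul, ← map_add, ← map_add]
    congr 1
    linear_combination (-ε) * e + (z' - z) * hε
  · rintro ⟨⟨c, x, z⟩, ⟨c', x', z'⟩⟩ hu ⟨⟨d, y, w⟩, ⟨d', y', w'⟩⟩ hu' h
    simp only [Finset.coe_filter, Finset.mem_product, Set.mem_ofPred_eq] at hu hu'
    simp only [Prod.mk.injEq, φi.eq_iff, one_mul, mul_right_inj' hε0] at h
    obtain ⟨⟨rfl, h1, rfl⟩, ⟨rfl, h2, rfl⟩⟩ := h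
    have hz : z ≠ 0 := fun h => hZ (h ▸ hu.1.1.2.2)
    have hz' : z' ≠ 0 := fun h => hZ (h ▸ hu.1.2.2.2)
    rw [mul_right_inj' hz] at h1
    rw [mul_right_inj' hz'] at h2
    rw [h1, h2]

end sextuples

/-! ### Energies and representation functions -/

section energy

/-- Cauchy-Schwarz for a sum of `h` along a map `g`, in terms of the coincidences of `g`. -/
theorem sum_comp_sq_le {ι α : Type*} [DecidableEq α] (W : Finset ι) (g : ι → α) (h : α → ℕ)
    (E : ℕ) (hE : ∀ V : Finset α, ∑ u ∈ V, h u ^ 2 ≤ E) :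
    (∑ w ∈ W, h (g w)) ^ 2 ≤ #{p ∈ W ×ˢ W | g p.1 = g p.2} * E := by
  rw [Finset.sum_comp]
  simp only [smul_eq_mul]
  refine (Finset.sum_mul_sq_le_sq_mul_sq _ _ _).trans (Nat.mul_le_mul ?_ (hE _))
  rw [Finset.card_eq_sum_card_fiberwise (f := fun p => g p.1) (t := W.image g)]
  · refine Finset.sum_le_sum fun u _ => ?_
    rw [sq, ← Finset.card_product]
    refine Finset.card_le_card fun p hp => ?_
    simp only [Finset.mem_product, Finset.mem_filter] at hp ⊢
    exact ⟨⟨⟨hp.1.1, hp.2.1⟩, hp.1.2.trans hp.2.2.symm⟩, hp.1.2⟩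
  · intro p hp
    have := (Finset.mem_filter.1 (Finset.mem_coe.1 hp)).1
    exact Finset.mem_coe.2 (Finset.mem_image_of_mem _ (Finset.mem_product.1 this).1)

theorem card_sq_le_card_image {ι α : Type*} [DecidableEq α] (W : Finset ι) (g : ι → α)
    (S : Finset α) (hS : ∀ w ∈ W, g w ∈ S) :
    #W ^ 2 ≤ #{p ∈ W ×ˢ W | g p.1 = g p.2} * #S := by
  have := sum_comp_sq_le W g (fun u => if u ∈ S then 1 else 0) #S (fun V => by
    simp only [ite_pow, one_pow, ne_eq, OfNat.ofNat_ne_zero, not_false_eq_true, zero_pow,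
      Finset.sum_boole, Nat.cast_id]
    exact Finset.card_le_card fun x hx => (Finset.mem_filter.1 hx).2)
  rwa [Finset.sum_congr rfl (fun w hw => if_pos (hS w hw)), Finset.sum_const, smul_eq_mul,
    mul_one] at this

/-- Dyadic summation of a weak fourth-moment bound. -/
theorem sum_pow_four_le {ι : Type*} (D : Finset ι) (r : ι → ℕ) (L M : ℕ)
    (h1 : ∀ x ∈ D, 1 ≤ r x) (hL : ∀ x ∈ D, r x < 2 ^ L)
    (hM : ∀ τ, 1 ≤ τ → #{x ∈ D | τ ≤ r x} * τ ^ 4 ≤ M) : ∑ x ∈ D, r x ^ 4 ≤ 16 * (L * M) := by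
  have key : ∀ x ∈ D, r x ^ 4 ≤ ∑ j ∈ Finset.range L, if 2 ^ j ≤ r x then 16 * (2 ^ j) ^ 4 else 0 := by
    intro x hx
    have h0 : r x ≠ 0 := by have := h1 x hx; omega
    have hj : Nat.log 2 (r x) ∈ Finset.range L :=
      Finset.mem_range.2 (Nat.log_lt_of_lt_pow h0 (hL x hx))
    refine le_trans ?_ (Finset.single_le_sum (fun _ _ => Nat.zero_le _) hj)
    rw [if_pos (Nat.pow_log_le_self 2 h0)]
    have := Nat.lt_pow_succ_log_self (b := 2) (by norm_num) (r x)
    calc r x ^ 4 ≤ (2 ^ (Nat.log 2 (r x) + 1)) ^ 4 := Nat.pow_le_pow_left this.le 4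
      _ = 16 * (2 ^ Nat.log 2 (r x)) ^ 4 := by rw [pow_succ 2]; ring
  refine (Finset.sum_le_sum key).trans ?_
  rw [Finset.sum_comm]
  calc _ ≤ ∑ j ∈ Finset.range L, 16 * M := by
        refine Finset.sum_le_sum fun j _ => ?_
        rw [← Finset.sum_filter, Finset.sum_const, smul_eq_mul]
        have := hM (2 ^ j) Nat.one_le_two_pow
        linarith
    _ = _ := by rw [Finset.sum_const, Finset.card_range, smul_eq_mul]; ring

/-- Exchange argument: if `B'` minimises the total weight among the `#B'`-subsets of `B`, then every
element outside `B'` is joined to `B'` with at least the average weight, up to the diagonal. -/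
theorem le_of_minimal {ι : Type*} [DecidableEq ι] (R : ι → ι → ℕ) (hR : ∀ x y, R x y = R y x)
    (s : ℕ) (B B' : Finset ι) (hs : ∀ x ∈ B, R x x = s) (hB : B' ⊆ B)
    (hmin : ∀ B₁ ⊆ B, #B₁ = #B' → ∑ x ∈ B', ∑ y ∈ B', R x y ≤ ∑ x ∈ B₁, ∑ y ∈ B₁, R x y)
    (z : ι) (hz : z ∈ B) (hz' : z ∉ B') :
    ∑ x ∈ B', ∑ y ∈ B', R x y ≤ #B' * (∑ y ∈ B', R z y) + #B' * s := by
  have key : ∀ x ∈ B', ∑ y ∈ B', R x y ≤ ∑ y ∈ B', R z y + s := by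
    intro x hx
    set D := B'.erase x with hD
    have hxD : x ∉ D := Finset.notMem_erase x B'
    have hzD : z ∉ D := fun h => hz' (Finset.mem_of_mem_erase h)
    have hB' : B' = insert x D := (Finset.insert_erase hx).symm
    have := hmin (insert z D) (by
      intro y hy
      rcases Finset.mem_insert.1 hy with rfl | hy
      · exact hz
      · exact hB (Finset.mem_of_mem_erase hy)) (by
      rw [hB', Finset.card_insert_of_notMem hzD, Finset.card_insert_of_notMem hxD])
    rw [hB'] at this ⊢
    simp only [Finset.sum_insert hzD, Finset.sum_insert hxD, Finset.sum_add_distrib, hs z hz,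
      hs x (hB hx)] at this ⊢
    have e1 : ∑ y ∈ D, R y z = ∑ y ∈ D, R z y := Finset.sum_congr rfl fun y _ => hR _ _
    have e2 : ∑ y ∈ D, R y x = ∑ y ∈ D, R x y := Finset.sum_congr rfl fun y _ => hR _ _
    omega
  calc _ ≤ ∑ x ∈ B', (∑ y ∈ B', R z y + s) := Finset.sum_le_sum key
    _ = _ := by rw [Finset.sum_const, smul_eq_mul]; ring

variable {F : Type*} [Field F] [DecidableEq F]

/-- The bound of `card_sextuples_le` when none of the three sets is larger than the product of the
sizes of the other two, so that the collinearity term is dominated. -/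
theorem card_sextuples_sq_le (C X Z : Finset F) (hZ : (0 : F) ∉ Z) (ε : F) (hε : ε * ε = 1)
    (M : ℕ) (h0 : 0 < #C * #X * #Z)
    (hC : #C ≤ #X * #Z) (hX : #X ≤ #C * #Z) (hZk : #Z ≤ #C * #X)
    (hchar : ∀ j : ℕ, 0 < j → j ≤ M → (j : F) ≠ 0) (hN : 196 * (#C * #X * #Z) ≤ M ^ 2) :
    #{u ∈ (C ×ˢ X ×ˢ Z) ×ˢ (C ×ˢ X ×ˢ Z) |
      u.2.2.2 * (u.1.2.1 * u.1.1 + ε) = u.1.2.2 * (u.2.2.1 * u.2.1 + ε)} ^ 2 ≤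
      1024 * (#C * #X * #Z) ^ 3 := by
  set N := #C * #X * #Z with hN'
  have hs := Nat.sqrt_le' N
  have hs1 : 1 ≤ Nat.sqrt N := Nat.sqrt_pos.2 h0
  have k1 : #C ≤ Nat.sqrt N := Nat.le_sqrt.2 (by
    calc #C * #C ≤ #C * (#X * #Z) := Nat.mul_le_mul_left _ hC
      _ = N := by rw [hN']; ring)
  have k2 : #X ≤ Nat.sqrt N := Nat.le_sqrt.2 (by
    calc #X * #X ≤ #X * (#C * #Z) := Nat.mul_le_mul_left _ hX
      _ = N := by rw [hN']; ring)
  have k3 : #Z ≤ Nat.sqrt N := Nat.le_sqrt.2 (by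
    calc #Z * #Z ≤ #Z * (#C * #X) := Nat.mul_le_mul_left _ hZk
      _ = N := by rw [hN']; ring)
  have hM : 14 * Nat.sqrt N ≤ M := by
    refine (Nat.pow_le_pow_iff_left (n := 2) (by norm_num)).1 ?_
    nlinarith
  have := card_sextuples_le C X Z hZ ε hε (Nat.sqrt N) (Nat.sqrt N + 1) hs1 k1 k2 k3
    (fun j h0 hj => hchar j h0 (by omega)) (Nat.lt_succ_sqrt' N)
  rw [← hN'] at this
  calc _ ≤ ((7 * (Nat.sqrt N + 1) + Nat.sqrt N + 1) * (2 * N)) ^ 2 := Nat.pow_le_pow_left this 2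
    _ ≤ ((16 * Nat.sqrt N) * (2 * N)) ^ 2 :=
        Nat.pow_le_pow_left (Nat.mul_le_mul_right _ (by omega)) 2
    _ = 1024 * (Nat.sqrt N ^ 2 * N ^ 2) := by ring
    _ ≤ 1024 * (N * N ^ 2) := by gcongr
    _ = _ := by ring

/-- The number of representations `u = s / b` with `s ∈ S`, `b ∈ B`; in particular `fib A A` counts
representations as a ratio of elements of `A`. -/
def fib (B S : Finset F) (u : F) : ℕ := #{b ∈ B | u * b ∈ S}

/-- The number of solutions of `s / b = s' / b'` with `s, s' ∈ S`. -/
def pairCount (S : Finset F) (b b' : F) : ℕ := #{s ∈ S | s / b * b' ∈ S}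

theorem sum_pairCount (B S : Finset F) (b : F) :
    ∑ b' ∈ B, pairCount S b b' = ∑ s ∈ S, fib B S (s / b) := by
  simp only [pairCount, fib, Finset.card_filter]
  exact Finset.sum_comm

theorem sum_fib_sq_le (B S : Finset F) (hB : (0 : F) ∉ B) (V : Finset F) :
    ∑ u ∈ V, fib B S u ^ 2 ≤ ∑ b ∈ B, ∑ b' ∈ B, pairCount S b b' := by
  simp only [sum_pairCount]
  have e : ∀ u ∈ V, fib B S u ^ 2 = ∑ b ∈ B, if u * b ∈ S then fib B S u else 0 := by
    intro u _
    rw [← Finset.sum_filter, Finset.sum_const, smul_eq_mul, sq]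
    rfl
  rw [Finset.sum_congr rfl e, Finset.sum_comm]
  refine Finset.sum_le_sum fun b hb => ?_
  have hb0 : b ≠ 0 := fun h => hB (h ▸ hb)
  rw [← Finset.sum_filter]
  calc ∑ u ∈ V with u * b ∈ S, fib B S u
      = ∑ s ∈ (V.filter (fun u => u * b ∈ S)).image (fun u => u * b), fib B S (s / b) := by
        rw [Finset.sum_image]
        · exact Finset.sum_congr rfl fun u _ => by rw [mul_div_cancel_right₀ _ hb0]
        · intro u _ v _ h
          exact mul_right_cancel₀ hb0 h
    _ ≤ _ := Finset.sum_le_sum_of_subset (by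
        intro s hs
        obtain ⟨u, hu, rfl⟩ := Finset.mem_image.1 hs
        exact (Finset.mem_filter.1 hu).2)

theorem pairCount_comm (S : Finset F) {b b' : F} (hb : b ≠ 0) (hb' : b' ≠ 0) :
    pairCount S b b' = pairCount S b' b := by
  refine Finset.card_nbij' (fun s => s / b * b') (fun s => s / b' * b) ?_ ?_ ?_ ?_ <;>
    intro s hs <;> simp only [Finset.coe_filter, Set.mem_ofPred_eq] at hs ⊢
  · refine ⟨hs.2, ?_⟩
    rw [show s / b * b' / b' * b = s by field_simp]; exact hs.1
  · refine ⟨hs.2, ?_⟩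
    rw [show s / b' * b / b * b' = s by field_simp]; exact hs.1
  · field_simp
  · field_simp

theorem pairCount_self (S : Finset F) {b : F} (hb : b ≠ 0) : pairCount S b b = #S := by
  rw [pairCount, Finset.filter_true_of_mem]
  intro s hs
  rwa [div_mul_cancel₀ _ hb]

theorem pairCount_le (S : Finset F) (b b' : F) : pairCount S b b' ≤ #S :=
  Finset.card_filter_le _ _

theorem le_pairCount (A S : Finset F) {b b' : F} (hb : b ≠ 0) (h : ∀ a ∈ A, a * b ∈ S)
    (h' : ∀ a ∈ A, a * b' ∈ S) : #A ≤ pairCount S b b' := by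
  refine Finset.card_le_card_of_injOn (fun a => a * b) ?_ ?_
  · intro a ha
    simp only [Finset.coe_filter, Set.mem_ofPred_eq]
    exact ⟨h a ha, by rw [mul_div_cancel_right₀ _ hb]; exact h' a ha⟩
  · intro a _ a' _ e
    exact mul_right_cancel₀ hb e

end energy

/-! ### Popular ratios -/

section levels

variable {F : Type*} [Field F] [DecidableEq F]

theorem card_le_of_fib_pos (A X : Finset F) (hA : (0 : F) ∉ A) (hX : ∀ x ∈ X, 1 ≤ fib A A x) :
    #X ≤ #A * #A := by
  rw [← Finset.card_product]
  refine (Finset.card_le_card (t := (A ×ˢ A).image (fun u => u.1 / u.2)) ?_).trans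
    Finset.card_image_le
  intro x hx
  obtain ⟨c, hc⟩ := Finset.card_pos.1 (hX x hx)
  rw [Finset.mem_filter] at hc
  refine Finset.mem_image.2 ⟨(x * c, c), Finset.mem_product.2 ⟨hc.2, hc.1⟩, ?_⟩
  exact mul_div_cancel_right₀ _ (fun h => hA (h ▸ hc.1))

/-- The level sets of the ratio counts of `A`. If `x` is a ratio `a / c` in at least `τ` ways, then
`a + 1 = x c + 1` is correlated with `B` by `hF`; so the values `s / (x c + 1)` are often ratios
`s' / b`, and `sum_comp_sq_le` compares this with the coincidences among these values. -/
theorem card_level_le_left (A B S X : Finset F) (τ n M : ℕ) (hA : (0 : F) ∉ A) (hB : (0 : F) ∉ B)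
    (hS : (0 : F) ∉ S) (hτ : 1 ≤ τ) (hX : ∀ x ∈ X, τ ≤ fib A A x)
    (hF : ∀ a ∈ A, ∑ b ∈ B, ∑ b' ∈ B, pairCount S b b' ≤
      2 * #B * ∑ b' ∈ B, pairCount S (a + 1) b')
    (hAn : #A ≤ n) (hBn : #B ≤ n) (hAS : #A ≤ #S) (hSn : #S ≤ n ^ 2)
    (hchar : ∀ j : ℕ, 0 < j → j ≤ M → (j : F) ≠ 0) (hM : 196 * n ^ 5 ≤ M ^ 2) :
    #X * τ ^ 4 * (∑ b ∈ B, ∑ b' ∈ B, pairCount S b b') ^ 2 ≤ 2 ^ 14 * n ^ 7 * #S ^ 3 := by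
  set E := ∑ b ∈ B, ∑ b' ∈ B, pairCount S b b' with hE
  rcases X.eq_empty_or_nonempty with rfl | hXne
  · simp
  have hXpos := hXne.card_pos
  obtain ⟨x₀, hx₀⟩ := hXne
  have hτA : τ ≤ #A := (hX x₀ hx₀).trans (Finset.card_filter_le _ _)
  have hXA := card_le_of_fib_pos A X hA (fun x hx => hτ.trans (hX x hx))
  by_cases hSX : #A * #X < #S
  · -- In this range the trivial bounds suffice.
    have hES : E ≤ n ^ 2 * #S := by
      calc E ≤ ∑ b ∈ B, ∑ b' ∈ B, #S :=
            Finset.sum_le_sum fun b _ => Finset.sum_le_sum fun b' _ => pairCount_le _ _ _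
        _ = #B * #B * #S := by simp only [Finset.sum_const, smul_eq_mul]; ring
        _ ≤ n * n * #S := by gcongr
        _ = _ := by ring
    calc #X * τ ^ 4 * E ^ 2 ≤ #X * #A ^ 4 * (n ^ 2 * #S) ^ 2 := by gcongr
      _ = (#A * #X) * #A ^ 3 * (n ^ 4 * #S ^ 2) := by ring
      _ ≤ #S * n ^ 3 * (n ^ 4 * #S ^ 2) := by gcongr
      _ = 1 * n ^ 7 * #S ^ 3 := by ring
      _ ≤ _ := by gcongr; norm_num
  push Not at hSX
  rcases Nat.eq_zero_or_pos E with h0 | hEpos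
  · rw [h0]; simp
  have hApos : 0 < #A := by omega
  have hSpos : 0 < #S := by omega
  set g : F × F × F → F := fun w => w.2.2 / (w.2.1 * w.1 + 1) with hg
  have step2 := sum_comp_sq_le (A ×ˢ X ×ˢ S) g (fib B S) E (sum_fib_sq_le B S hB)
  clear_value E
  have step1 : #X * τ * E ≤ 2 * #B * ∑ w ∈ A ×ˢ X ×ˢ S, fib B S (g w) := by
    have e : #X * τ * E = ∑ x ∈ X, τ * E := by rw [Finset.sum_const, smul_eq_mul, mul_assoc]
    rw [Finset.sum_product, Finset.sum_comm, Finset.sum_product, Finset.mul_sum, e]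
    refine Finset.sum_le_sum fun x hx => ?_
    rw [Finset.sum_comm]
    calc τ * E ≤ fib A A x * E := Nat.mul_le_mul_right _ (hX x hx)
      _ = ∑ c ∈ A with x * c ∈ A, E := by rw [Finset.sum_const, smul_eq_mul]; rfl
      _ ≤ ∑ c ∈ A with x * c ∈ A, 2 * #B * ∑ s ∈ S, fib B S (g (c, x, s)) := by
          refine Finset.sum_le_sum fun c hc => ?_
          have := hF (x * c) (Finset.mem_filter.1 hc).2
          rwa [sum_pairCount] at this
      _ ≤ ∑ c ∈ A, 2 * #B * ∑ s ∈ S, fib B S (g (c, x, s)) :=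
          Finset.sum_le_sum_of_subset (Finset.filter_subset _ _)
      _ = _ := by rw [Finset.mul_sum]
  have step3 := card_sextuples_sq_le A X S hS 1 (one_mul 1) M (by positivity)
    (hAS.trans (Nat.le_mul_of_pos_left _ hXpos)) (hXA.trans (Nat.mul_le_mul_left _ hAS)) hSX
    hchar (le_trans (by
      calc 196 * (#A * #X * #S) ≤ 196 * (#A * (#A * #A) * #S) := by gcongr
        _ ≤ 196 * (n * (n * n) * n ^ 2) := by gcongr
        _ = 196 * n ^ 5 := by ring) hM)
  set J := #{u ∈ (A ×ˢ X ×ˢ S) ×ˢ (A ×ˢ X ×ˢ S) |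
      u.2.2.2 * (u.1.2.1 * u.1.1 + 1) = u.1.2.2 * (u.2.2.1 * u.2.1 + 1)} with hJ
  have step4 : #{p ∈ (A ×ˢ X ×ˢ S) ×ˢ (A ×ˢ X ×ˢ S) | g p.1 = g p.2} ≤ J := by
    refine Finset.card_le_card fun p hp => ?_
    obtain ⟨⟨c, x, z⟩, ⟨c', x', z'⟩⟩ := p
    simp only [Finset.mem_filter, Finset.mem_product] at hp ⊢
    refine ⟨hp.1, ?_⟩
    have e := hp.2
    simp only [hg] at e
    have hz : z ≠ 0 := fun h => hS (h ▸ hp.1.1.2.2)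
    have hz' : z' ≠ 0 := fun h => hS (h ▸ hp.1.2.2.2)
    -- A vanishing denominator makes both fractions zero, and then both sides vanish.
    by_cases h1 : x * c + 1 = 0
    · rw [h1, div_zero, eq_comm, div_eq_zero_iff] at e
      rw [h1, e.resolve_left hz', mul_zero, mul_zero]
    · by_cases h2 : x' * c' + 1 = 0
      · rw [h2, div_zero, div_eq_zero_iff] at e
        exact absurd (e.resolve_left hz) h1
      · rw [div_eq_div_iff h1 h2] at e
        exact e.symm
  have step5 : (#X * τ) ^ 2 * E ≤ 4 * #B ^ 2 * J := by
    refine le_of_mul_le_mul_right ?_ hEpos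
    calc (#X * τ) ^ 2 * E * E = (#X * τ * E) ^ 2 := by ring
      _ ≤ (2 * #B * ∑ w ∈ A ×ˢ X ×ˢ S, fib B S (g w)) ^ 2 := Nat.pow_le_pow_left step1 2
      _ = 4 * #B ^ 2 * (∑ w ∈ A ×ˢ X ×ˢ S, fib B S (g w)) ^ 2 := by ring
      _ ≤ 4 * #B ^ 2 * (J * E) := Nat.mul_le_mul_left _ (step2.trans (Nat.mul_le_mul_right _ step4))
      _ = _ := by ring
  refine le_of_mul_le_mul_right ?_ (show 0 < #X ^ 3 by positivity)
  calc #X * τ ^ 4 * E ^ 2 * #X ^ 3 = ((#X * τ) ^ 2 * E) ^ 2 := by ring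
    _ ≤ (4 * #B ^ 2 * J) ^ 2 := Nat.pow_le_pow_left step5 2
    _ = 16 * #B ^ 4 * J ^ 2 := by ring
    _ ≤ 16 * n ^ 4 * (1024 * (#A * #X * #S) ^ 3) := by gcongr
    _ ≤ 16 * n ^ 4 * (1024 * (n * #X * #S) ^ 3) := by gcongr
    _ = _ := by ring

/-- The level sets of the ratio counts of `B'`. If `x = b₁ / c` in at least `τ` ways, then the products
`(x c - 1) b = (b₁ - 1) b` lie in `S`, so they have many coincidences. -/
theorem card_level_le_right (B B' S X : Finset F) (τ n M : ℕ) (hB : (0 : F) ∉ B) (hB' : B' ⊆ B)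
    (hτ : 1 ≤ τ) (hX : ∀ x ∈ X, τ ≤ fib B' B' x)
    (hS : ∀ b ∈ B, ∀ b' ∈ B, (b - 1) * b' ∈ S)
    (hn : #B = n) (hnB : n ≤ 2 * #B' + 1) (hnS : n ≤ #S)
    (hchar : ∀ j : ℕ, 0 < j → j ≤ M → (j : F) ≠ 0) (hM : 196 * n ^ 5 ≤ M ^ 2) :
    #X * τ ^ 4 ≤ 1024 * n ^ 2 * #S ^ 2 := by
  rcases X.eq_empty_or_nonempty with rfl | hXne
  · simp
  have hXpos := hXne.card_pos
  obtain ⟨x₀, hx₀⟩ := hXne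
  have hB'0 : (0 : F) ∉ B' := fun h => hB (hB' h)
  have hτB : τ ≤ #B' := (hX x₀ hx₀).trans (Finset.card_filter_le _ _)
  have hBn : #B' ≤ n := hn ▸ Finset.card_le_card hB'
  have hXB := card_le_of_fib_pos B' X hB'0 (fun x hx => hτ.trans (hX x hx))
  by_cases hX3 : #X < 3
  · calc #X * τ ^ 4 ≤ 2 * n ^ 4 := by
          gcongr
          · omega
          · omega
      _ = 2 * n ^ 2 * n ^ 2 := by ring
      _ ≤ 1024 * n ^ 2 * #S ^ 2 := by gcongr; norm_num
  push Not at hX3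
  have hBpos : 0 < #B' := by omega
  have hnpos : 0 < n := by omega
  set Z := B.image (fun b => b⁻¹) with hZ
  have hZ0 : (0 : F) ∉ Z := by
    intro h
    obtain ⟨b, hb, e⟩ := Finset.mem_image.1 h
    exact hB (inv_eq_zero.1 e ▸ hb)
  have hZc : #Z = n := by rw [hZ, Finset.card_image_of_injective _ inv_injective, hn]
  set W := (B' ×ˢ X ×ˢ Z).filter (fun w => w.2.1 * w.1 ∈ B') with hW
  set g : F × F × F → F := fun w => (w.2.1 * w.1 - 1) / w.2.2 with hg
  have step1 : #X * τ * n ≤ #W := by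
    have : #W = ∑ x ∈ X, ∑ z ∈ Z, fib B' B' x := by
      rw [hW, Finset.card_filter, Finset.sum_product, Finset.sum_comm, Finset.sum_product]
      refine Finset.sum_congr rfl fun x _ => Finset.sum_congr rfl fun z _ => ?_
      rw [fib, Finset.card_filter]
    rw [this]
    calc #X * τ * n = ∑ x ∈ X, ∑ z ∈ Z, τ := by
          simp only [Finset.sum_const, smul_eq_mul, hZc]; ring
      _ ≤ _ := Finset.sum_le_sum fun x hx => Finset.sum_le_sum fun z _ => hX x hx
  have step2 := card_sq_le_card_image W g S (by
    rintro ⟨c, x, z⟩ hw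
    simp only [hW, Finset.mem_filter, Finset.mem_product] at hw
    obtain ⟨b, hb, rfl⟩ := Finset.mem_image.1 hw.1.2.2
    simp only [hg, div_inv_eq_mul]
    exact hS _ (hB' hw.2) _ hb)
  have step3 := card_sextuples_sq_le B' X Z hZ0 (-1) (by ring) M
    (by rw [hZc]; positivity) (by rw [hZc]; exact hBn.trans (Nat.le_mul_of_pos_left _ hXpos))
    (by rw [hZc]; exact hXB.trans (Nat.mul_le_mul_left _ hBn))
    (by rw [hZc]; nlinarith) hchar (le_trans (by
      rw [hZc]
      calc 196 * (#B' * #X * n) ≤ 196 * (#B' * (#B' * #B') * n) := by gcongr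
        _ ≤ 196 * (n * (n * n) * n) := by gcongr
        _ = 196 * n ^ 4 := by ring
        _ ≤ 196 * n ^ 5 := by gcongr; omega) hM)
  set J := #{u ∈ (B' ×ˢ X ×ˢ Z) ×ˢ (B' ×ˢ X ×ˢ Z) |
      u.2.2.2 * (u.1.2.1 * u.1.1 + -1) = u.1.2.2 * (u.2.2.1 * u.2.1 + -1)} with hJ
  have step4 : #{p ∈ W ×ˢ W | g p.1 = g p.2} ≤ J := by
    refine Finset.card_le_card fun p hp => ?_
    obtain ⟨⟨c, x, z⟩, ⟨c', x', z'⟩⟩ := p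
    simp only [hW, Finset.mem_filter, Finset.mem_product] at hp ⊢
    refine ⟨⟨hp.1.1.1, hp.1.2.1⟩, ?_⟩
    have e := hp.2
    simp only [hg] at e
    rw [div_eq_div_iff (fun h => hZ0 (h ▸ hp.1.1.1.2.2)) (fun h => hZ0 (h ▸ hp.1.2.1.2.2))] at e
    linear_combination e
  refine le_of_mul_le_mul_right ?_ (show 0 < #X ^ 3 * n ^ 4 by positivity)
  calc #X * τ ^ 4 * (#X ^ 3 * n ^ 4) = ((#X * τ * n) ^ 2) ^ 2 := by ring
    _ ≤ (#W ^ 2) ^ 2 := by gcongr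
    _ ≤ (J * #S) ^ 2 := Nat.pow_le_pow_left (step2.trans (Nat.mul_le_mul_right _ step4)) 2
    _ = J ^ 2 * #S ^ 2 := by ring
    _ ≤ 1024 * (#B' * #X * #Z) ^ 3 * #S ^ 2 := by gcongr
    _ ≤ 1024 * (n * #X * n) ^ 3 * #S ^ 2 := by rw [hZc]; gcongr
    _ = _ := by ring

end levels

/-! ### Rectangles and their product tables -/

section rectangles

variable {F : Type*} [Field F] [DecidableEq F]

/-- The number of ways to write `y` as a product of two fractions `s / b`, `s' / b'` is at most the
energy. -/
theorem sum_fib_div_le (B S : Finset F) (hB : (0 : F) ∉ B) (y : F) (hy : y ≠ 0) :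
    ∑ w ∈ B ×ˢ S, fib B S (y / (w.2 / w.1)) ≤ ∑ b ∈ B, ∑ b' ∈ B, pairCount S b b' := by
  set E := ∑ b ∈ B, ∑ b' ∈ B, pairCount S b b' with hE
  have h1 := sum_comp_sq_le (B ×ˢ S) (fun w => y / (w.2 / w.1)) (fib B S) E (sum_fib_sq_le B S hB)
  have h2 : #{p ∈ (B ×ˢ S) ×ˢ (B ×ˢ S) | y / (p.1.2 / p.1.1) = y / (p.2.2 / p.2.1)} ≤ E := by
    have : E = ∑ w ∈ B ×ˢ S, fib B S (w.2 / w.1) := by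
      rw [hE, Finset.sum_product]
      exact Finset.sum_congr rfl fun b _ => sum_pairCount B S b
    rw [this, Finset.card_filter, Finset.sum_product]
    refine Finset.sum_le_sum fun w _ => ?_
    rw [← Finset.card_filter]
    have inj : ∀ p ∈ B ×ˢ S, y / (w.2 / w.1) = y / (p.2 / p.1) → p.2 = w.2 / w.1 * p.1 := by
      intro p hp e
      have hp0 : p.1 ≠ 0 := fun h => hB (h ▸ (Finset.mem_product.1 hp).1)
      rw [div_eq_mul_inv, div_eq_mul_inv y, mul_right_inj' hy, inv_inj] at e
      rw [e, div_mul_cancel₀ _ hp0]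
    refine Finset.card_le_card_of_injOn (fun p => p.1) ?_ ?_
    · intro p hp
      have hp' := Finset.mem_filter.1 (Finset.mem_coe.1 hp)
      refine Finset.mem_coe.2 (Finset.mem_filter.2 ⟨(Finset.mem_product.1 hp'.1).1, ?_⟩)
      rw [← inj p hp'.1 hp'.2]
      exact (Finset.mem_product.1 hp'.1).2
    · intro p hp p' hp' e
      have h1 := Finset.mem_filter.1 (Finset.mem_coe.1 hp)
      have h2 := Finset.mem_filter.1 (Finset.mem_coe.1 hp')
      refine Prod.ext e ?_
      rw [inj p h1.1 h1.2, inj p' h2.1 h2.2]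
      exact congrArg _ e
  refine (Nat.pow_le_pow_iff_left (n := 2) (by norm_num)).1 (h1.trans ?_)
  rw [sq]
  exact Nat.mul_le_mul_right _ h2

/-- The multiplicative quadruples of popular products are controlled by `E`, through
`a b · a' b' = s s'`, that is `(s / b) (s' / b') = a a'`. -/
theorem card_quadruples_le (A B S P : Finset F) (hA : (0 : F) ∉ A) (hB : (0 : F) ∉ B)
    (hS : (0 : F) ∉ S) (q κ : ℕ) (hP : ∀ s ∈ P, q ≤ κ * #{u ∈ A ×ˢ B | u.1 * u.2 = s}) :
    q ^ 2 * #{v ∈ P ×ˢ S ×ˢ S ×ˢ P | v.1 * v.2.2.2 = v.2.1 * v.2.2.1} ≤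
      κ ^ 2 * (#A ^ 2 * ∑ b ∈ B, ∑ b' ∈ B, pairCount S b b') := by
  set I := {v ∈ P ×ˢ S ×ˢ S ×ˢ P | v.1 * v.2.2.2 = v.2.1 * v.2.2.1} with hI
  set Y := {y ∈ I ×ˢ (A ×ˢ B) ×ˢ (A ×ˢ B) |
    y.2.1.1 * y.2.1.2 = y.1.1 ∧ y.2.2.1 * y.2.2.2 = y.1.2.2.2} with hY
  have h1 : q ^ 2 * #I ≤ κ ^ 2 * #Y := by
    have : #Y = ∑ v ∈ I, #{u ∈ A ×ˢ B | u.1 * u.2 = v.1} *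
        #{u ∈ A ×ˢ B | u.1 * u.2 = v.2.2.2} := by
      rw [hY, Finset.card_filter, Finset.sum_product]
      refine Finset.sum_congr rfl fun v _ => ?_
      rw [← Finset.card_filter, ← Finset.card_product, ← Finset.filter_product]
    rw [this, Finset.mul_sum, mul_comm, ← smul_eq_mul, ← Finset.sum_const]
    refine Finset.sum_le_sum fun v hv => ?_
    have hv' := (Finset.mem_filter.1 hv).1
    simp only [Finset.mem_product] at hv'
    calc q ^ 2 = q * q := sq q
      _ ≤ _ := Nat.mul_le_mul (hP _ hv'.1) (hP _ hv'.2.2.2)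
      _ = _ := by ring
  have h2 : #Y ≤ #{y ∈ (A ×ˢ A) ×ˢ (B ×ˢ S) ×ˢ B |
      y.1.1 * y.1.2 / (y.2.1.2 / y.2.1.1) * y.2.2 ∈ S} := by
    refine Finset.card_le_card_of_injOn
      (fun y => ((y.2.1.1, y.2.2.1), (y.2.1.2, y.1.2.1), y.2.2.2)) ?_ ?_
    · rintro ⟨⟨s1, s2, s3, s4⟩, ⟨a, b⟩, ⟨a', b'⟩⟩ hy
      simp only [hY, hI, Finset.coe_filter, Finset.mem_product, Finset.mem_filter,
        Set.mem_ofPred_eq] at hy ⊢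
      obtain ⟨⟨⟨⟨h1, h2, h3, h4⟩, e⟩, ⟨ha, hb⟩, ha', hb'⟩, e1, e2⟩ := hy
      refine ⟨⟨⟨ha, ha'⟩, ⟨hb, h2⟩, hb'⟩, ?_⟩
      have hb0 : b ≠ 0 := fun h => hB (h ▸ hb)
      have hs0 : s2 ≠ 0 := fun h => hS (h ▸ h2)
      have : a * a' / (s2 / b) * b' = s3 := by
        rw [← e1, ← e2] at e
        field_simp
        linear_combination e
      rwa [this]
    · rintro ⟨⟨s1, s2, s3, s4⟩, ⟨a, b⟩, ⟨a', b'⟩⟩ hy ⟨⟨t1, t2, t3, t4⟩, ⟨c, d⟩, ⟨c', d'⟩⟩ hy' h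
      simp only [hY, hI, Finset.coe_filter, Finset.mem_product, Finset.mem_filter,
        Set.mem_ofPred_eq] at hy hy'
      simp only [Prod.mk.injEq] at h ⊢
      obtain ⟨⟨rfl, rfl⟩, ⟨rfl, rfl⟩, rfl⟩ := h
      obtain ⟨⟨⟨⟨-, h2, -, -⟩, e⟩, -⟩, rfl, rfl⟩ := hy
      obtain ⟨⟨⟨-, e'⟩, -⟩, rfl, rfl⟩ := hy'
      have hs0 : s2 ≠ 0 := fun h => hS (h ▸ h2)
      exact ⟨⟨rfl, rfl, mul_left_cancel₀ hs0 (e.symm.trans e'), rfl⟩, ⟨rfl, rfl⟩, rfl, rfl⟩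
  have h3 : #{y ∈ (A ×ˢ A) ×ˢ (B ×ˢ S) ×ˢ B |
      y.1.1 * y.1.2 / (y.2.1.2 / y.2.1.1) * y.2.2 ∈ S} ≤
      #A ^ 2 * ∑ b ∈ B, ∑ b' ∈ B, pairCount S b b' := by
    rw [Finset.card_filter, Finset.sum_product, sq, ← Finset.card_product, ← smul_eq_mul,
      ← Finset.sum_const]
    refine Finset.sum_le_sum fun u hu => ?_
    rw [Finset.mem_product] at hu
    have hu0 : u.1 * u.2 ≠ 0 := mul_ne_zero (fun h => hA (h ▸ hu.1)) (fun h => hA (h ▸ hu.2))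
    refine le_trans (le_of_eq ?_) (sum_fib_div_le B S hB _ hu0)
    rw [Finset.sum_product]
    refine Finset.sum_congr rfl fun w _ => ?_
    rw [fib, Finset.card_filter]
  exact h1.trans (Nat.mul_le_mul_left _ (h2.trans h3))

/-- Pairs of `2 × 2` rectangles with the same table of products: all four ratios agree. -/
theorem card_rectangle_collisions_sq_le (A B : Finset F) (hA : (0 : F) ∉ A) (hB : (0 : F) ∉ B)
    (T : Finset ((F × F) × F × F)) (hT : T ⊆ (A ×ˢ A) ×ˢ B ×ˢ B) (L M N : ℕ)
    (hAL : #A < 2 ^ L) (hBL : #B < 2 ^ L)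
    (hM : ∀ X : Finset F, ∀ τ, 1 ≤ τ → (∀ x ∈ X, τ ≤ fib A A x) → #X * τ ^ 4 ≤ M)
    (hN : ∀ X : Finset F, ∀ τ, 1 ≤ τ → (∀ x ∈ X, τ ≤ fib B B x) → #X * τ ^ 4 ≤ N) :
    #{p ∈ T ×ˢ T |
      ((p.1.1.1 * p.1.2.1, p.1.1.1 * p.1.2.2, p.1.1.2 * p.1.2.1, p.1.1.2 * p.1.2.2) : F × F × F × F)
      = (p.2.1.1 * p.2.2.1, p.2.1.1 * p.2.2.2, p.2.1.2 * p.2.2.1, p.2.1.2 * p.2.2.2)} ^ 2 ≤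
      (16 * (L * M)) * (16 * (L * N)) := by
  set D := {x ∈ (A ×ˢ A).image (fun u => u.1 / u.2) | 1 ≤ fib A A x ∧ 1 ≤ fib B B x} with hD
  set G := {p ∈ T ×ˢ T |
      ((p.1.1.1 * p.1.2.1, p.1.1.1 * p.1.2.2, p.1.1.2 * p.1.2.1, p.1.1.2 * p.1.2.2) : F × F × F × F)
      = (p.2.1.1 * p.2.2.1, p.2.1.1 * p.2.2.2, p.2.1.2 * p.2.2.1, p.2.1.2 * p.2.2.2)} with hG
  have mem : ∀ p ∈ G, (p.1.1.1 ∈ A ∧ p.1.1.2 ∈ A ∧ p.1.2.1 ∈ B ∧ p.1.2.2 ∈ B) ∧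
      (p.2.1.1 ∈ A ∧ p.2.1.2 ∈ A ∧ p.2.2.1 ∈ B ∧ p.2.2.2 ∈ B) ∧
      p.1.1.1 = p.1.1.1 / p.2.1.1 * p.2.1.1 ∧ p.1.1.2 = p.1.1.1 / p.2.1.1 * p.2.1.2 ∧
      p.2.2.1 = p.1.1.1 / p.2.1.1 * p.1.2.1 ∧ p.2.2.2 = p.1.1.1 / p.2.1.1 * p.1.2.2 := by
    rintro ⟨⟨⟨a1, a2⟩, b1, b2⟩, ⟨⟨c1, c2⟩, d1, d2⟩⟩ hp
    simp only [hG, Finset.mem_filter, Finset.mem_product, Prod.mk.injEq] at hp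
    obtain ⟨⟨h1, h2⟩, e1, e2, e3, e4⟩ := hp
    have h1 := hT h1
    have h2 := hT h2
    simp only [Finset.mem_product] at h1 h2 ⊢
    have hc1 : c1 ≠ 0 := fun h => hA (h ▸ h2.1.1)
    have hb1 : b1 ≠ 0 := fun h => hB (h ▸ h1.2.1)
    have e5 : d1 = a1 / c1 * b1 := by field_simp; linear_combination -e1
    refine ⟨by tauto, by tauto, (div_mul_cancel₀ _ hc1).symm, ?_, e5, ?_⟩
    · apply mul_right_cancel₀ hb1
      rw [e3, e5]; ring
    · field_simp; linear_combination -e2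
  have h1 : #G ≤ ∑ x ∈ D, fib A A x ^ 2 * fib B B x ^ 2 := by
    rw [Finset.card_eq_sum_card_fiberwise (f := fun p => p.1.1.1 / p.2.1.1) (t := D)]
    · refine Finset.sum_le_sum fun x _ => ?_
      simp only [fib]
      rw [sq, sq, ← Finset.card_product, ← Finset.card_product, ← Finset.card_product]
      refine Finset.card_le_card_of_injOn
        (fun p => ((p.2.1.1, p.2.1.2), (p.1.2.1, p.1.2.2))) ?_ ?_
      · intro p hp
        obtain ⟨hpG, rfl⟩ := Finset.mem_filter.1 (Finset.mem_coe.1 hp)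
        obtain ⟨h1, h2, e1, e2, e3, e4⟩ := mem p hpG
        simp only [Finset.mem_coe, Finset.mem_product, Finset.mem_filter]
        rw [← e1, ← e2, ← e3, ← e4]
        tauto
      · intro p hp p' hp' h
        obtain ⟨hp, hx⟩ := Finset.mem_filter.1 (Finset.mem_coe.1 hp)
        obtain ⟨hp', hx'⟩ := Finset.mem_filter.1 (Finset.mem_coe.1 hp')
        obtain ⟨-, -, e1, e2, e3, e4⟩ := mem p hp
        obtain ⟨-, -, f1, f2, f3, f4⟩ := mem p' hp'
        rw [hx] at e1 e2 e3 e4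
        rw [hx'] at f1 f2 f3 f4
        simp only [Prod.mk.injEq] at h
        obtain ⟨⟨g1, g2⟩, g3, g4⟩ := h
        refine Prod.ext (Prod.ext (Prod.ext ?_ ?_) (Prod.ext g3 g4))
          (Prod.ext (Prod.ext g1 g2) (Prod.ext ?_ ?_))
        · rw [e1, f1, g1]
        · rw [e2, f2, g2]
        · rw [e3, f3, g3]
        · rw [e4, f4, g4]
    · intro p hp
      obtain ⟨h1, h2, e1, e2, e3, e4⟩ := mem p hp
      refine Finset.mem_coe.2 (Finset.mem_filter.2 ⟨Finset.mem_image.2 ⟨(p.1.1.1, p.2.1.1),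
        Finset.mem_product.2 ⟨h1.1, h2.1⟩, rfl⟩, Finset.card_pos.2 ⟨p.2.1.1, ?_⟩,
        Finset.card_pos.2 ⟨p.1.2.1, ?_⟩⟩)
      · rw [Finset.mem_filter, ← e1]; tauto
      · rw [Finset.mem_filter, ← e3]; tauto
  have h2 := Finset.sum_mul_sq_le_sq_mul_sq D (fun x => fib A A x ^ 2) (fun x => fib B B x ^ 2)
  simp only [← pow_mul] at h2
  norm_num at h2
  refine (Nat.pow_le_pow_left h1 2).trans (h2.trans (Nat.mul_le_mul ?_ ?_))
  · refine sum_pow_four_le D _ L M (fun x hx => (Finset.mem_filter.1 hx).2.1)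
      (fun x _ => (Finset.card_filter_le _ _).trans_lt hAL) fun τ hτ => ?_
    exact hM _ τ hτ fun x hx => (Finset.mem_filter.1 hx).2
  · refine sum_pow_four_le D _ L N (fun x hx => (Finset.mem_filter.1 hx).2.2)
      (fun x _ => (Finset.card_filter_le _ _).trans_lt hBL) fun τ hτ => ?_
    exact hN _ τ hτ fun x hx => (Finset.mem_filter.1 hx).2

/-- If at most one eighth of the pairs of `A × B` are bad, at least half of the `2 × 2` rectangles
have four good entries. -/
theorem le_card_rectangles (A B P : Finset F) (h : 8 * #{u ∈ A ×ˢ B | u.1 * u.2 ∉ P} ≤ #A * #B) :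
    (#A * #B) ^ 2 ≤ 2 * #{t ∈ (A ×ˢ A) ×ˢ B ×ˢ B | t.1.1 * t.2.1 ∈ P ∧ t.1.1 * t.2.2 ∈ P ∧
      t.1.2 * t.2.1 ∈ P ∧ t.1.2 * t.2.2 ∈ P} := by
  set T := {t ∈ (A ×ˢ A) ×ˢ B ×ˢ B | t.1.1 * t.2.1 ∈ P ∧ t.1.1 * t.2.2 ∈ P ∧
      t.1.2 * t.2.1 ∈ P ∧ t.1.2 * t.2.2 ∈ P} with hT
  set bad := {u ∈ A ×ˢ B | u.1 * u.2 ∉ P} with hbad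
  have tot : #((A ×ˢ A) ×ˢ B ×ˢ B) = (#A * #B) ^ 2 := by
    simp only [Finset.card_product]; ring
  have cover : (A ×ˢ A) ×ˢ B ×ˢ B ⊆ T ∪
      ((bad ×ˢ (A ×ˢ B)).image (fun v => ((v.1.1, v.2.1), (v.1.2, v.2.2))) ∪
      ((bad ×ˢ (A ×ˢ B)).image (fun v => ((v.1.1, v.2.1), (v.2.2, v.1.2))) ∪
      ((bad ×ˢ (A ×ˢ B)).image (fun v => ((v.2.1, v.1.1), (v.1.2, v.2.2))) ∪
      (bad ×ˢ (A ×ˢ B)).image (fun v => ((v.2.1, v.1.1), (v.2.2, v.1.2)))))) := by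
    rintro ⟨⟨a1, a2⟩, b1, b2⟩ ht
    have ht' := ht
    simp only [Finset.mem_product] at ht'
    obtain ⟨⟨h1, h2⟩, h3, h4⟩ := ht'
    simp only [Finset.mem_union]
    by_cases c1 : a1 * b1 ∈ P
    · by_cases c2 : a1 * b2 ∈ P
      · by_cases c3 : a2 * b1 ∈ P
        · by_cases c4 : a2 * b2 ∈ P
          · exact Or.inl (Finset.mem_filter.2 ⟨ht, c1, c2, c3, c4⟩)
          · refine Or.inr (Or.inr (Or.inr (Or.inr (Finset.mem_image.2 ⟨((a2, b2), (a1, b1)), ?_⟩))))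
            simp [*]
        · refine Or.inr (Or.inr (Or.inr (Or.inl (Finset.mem_image.2 ⟨((a2, b1), (a1, b2)), ?_⟩))))
          simp [*]
      · refine Or.inr (Or.inr (Or.inl (Finset.mem_image.2 ⟨((a1, b2), (a2, b1)), ?_⟩)))
        simp [*]
    · refine Or.inr (Or.inl (Finset.mem_image.2 ⟨((a1, b1), (a2, b2)), ?_⟩))
      simp [*]
  have hc : #(bad ×ˢ (A ×ˢ B)) = #bad * (#A * #B) := by simp only [Finset.card_product]
  have h1 := Finset.card_le_card cover
  rw [tot] at h1
  have h2 := h1.trans ((Finset.card_union_le _ _).trans (Nat.add_le_add_left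
    ((Finset.card_union_le _ _).trans (Nat.add_le_add Finset.card_image_le
      ((Finset.card_union_le _ _).trans (Nat.add_le_add Finset.card_image_le
        ((Finset.card_union_le _ _).trans
          (Nat.add_le_add Finset.card_image_le Finset.card_image_le)))))) _))
  rw [hc] at h2
  have h3 := Nat.mul_le_mul_right (#A * #B) h
  have e : (#A * #B) ^ 2 = #A * #B * (#A * #B) := sq _
  rw [mul_assoc] at h3
  omega

end rectangles

/-! ### The shifted product bound -/

section conclusion

/-- The bound with explicit constants, for a set avoiding the zeros of `a ↦ a (a + 1)`. -/
theorem shifted_product_core {F : Type*} [Field F] [DecidableEq F] (A S : Finset F) (n : ℕ)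
    (hn : #A = n)
    (hn6 : 6 ≤ n) (hA : (0 : F) ∉ A) (hA1 : (-1 : F) ∉ A) (hS : (0 : F) ∉ S)
    (hAS : ∀ a ∈ A, ∀ a' ∈ A, a * (a' + 1) ∈ S) (hSn : #S ≤ n ^ 2)
    (hchar : ∀ j : ℕ, 0 < j → j ≤ n ^ 4 → (j : F) ≠ 0) :
    n ^ 11 ≤ 2 ^ 80 * (Nat.log 2 n + 1) ^ 2 * #S ^ 9 := by
  set L := Nat.log 2 n + 1 with hL
  set m := n / 2 with hm
  have hnL : n < 2 ^ L := Nat.lt_pow_succ_log_self (by norm_num) n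
  have hq : n ^ 2 ≤ 6 * ((n - m) * m) := by
    obtain ⟨k, hk | hk⟩ := Nat.even_or_odd' n
    · rw [show m = k by omega, show n - k = k by omega, hk]; nlinarith
    · rw [show m = k by omega, show n - k = k + 1 by omega, hk]; nlinarith
  set B := A.image (· + 1) with hBdef
  have hBn : #B = n := by rw [hBdef, Finset.card_image_of_injective _ (add_left_injective 1), hn]
  have hB0 : (0 : F) ∉ B := by
    intro h
    obtain ⟨a, ha, e⟩ := Finset.mem_image.1 h
    exact hA1 (eq_neg_of_add_eq_zero_left e ▸ ha)
  have hABS : ∀ a ∈ A, ∀ b ∈ B, a * b ∈ S := by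
    intro a ha b hb
    obtain ⟨a', ha', rfl⟩ := Finset.mem_image.1 hb
    exact hAS a ha a' ha'
  have hnS : n ≤ #S := by
    obtain ⟨b, hb⟩ := Finset.card_pos.1 (show 0 < #B by omega)
    rw [← hn]
    refine Finset.card_le_card_of_injOn (fun a => a * b) (fun a ha => hABS a ha b hb) ?_
    intro a _ a' _ e
    exact mul_right_cancel₀ (fun h => hB0 (h ▸ hb)) e
  by_cases hbig : n * m < 2 * #S
  · have h1 : n ^ 2 ≤ 12 * #S := by
      have : (n - m) * m ≤ n * m := Nat.mul_le_mul_right _ (Nat.sub_le _ _)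
      omega
    calc n ^ 11 ≤ n ^ 18 := Nat.pow_le_pow_right (by omega) (by norm_num)
      _ = (n ^ 2) ^ 9 := by ring
      _ ≤ (12 * #S) ^ 9 := Nat.pow_le_pow_left h1 9
      _ = 12 ^ 9 * 1 ^ 2 * #S ^ 9 := by ring
      _ ≤ 2 ^ 80 * L ^ 2 * #S ^ 9 := Nat.mul_le_mul_right _
          (Nat.mul_le_mul (by norm_num) (Nat.pow_le_pow_left (by omega) 2))
  push Not at hbig
  obtain ⟨B', hB'mem, hmin⟩ := Finset.exists_min_image (B.powersetCard m)
    (fun B₁ => ∑ b ∈ B₁, ∑ b' ∈ B₁, pairCount S b b')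
    (Finset.powersetCard_nonempty.2 (by omega))
  obtain ⟨hB'B, hB'm⟩ := Finset.mem_powersetCard.1 hB'mem
  have hB'0 : (0 : F) ∉ B' := fun h => hB0 (hB'B h)
  have ne0 : ∀ b ∈ B, b ≠ 0 := fun b hb h => hB0 (h ▸ hb)
  set E := ∑ b ∈ B', ∑ b' ∈ B', pairCount S b b' with hE
  have hElow : m * m * n ≤ E := by
    calc m * m * n = ∑ b ∈ B', ∑ b' ∈ B', n := by
          simp only [Finset.sum_const, smul_eq_mul, hB'm]; ring
      _ ≤ E := by
        refine Finset.sum_le_sum fun b hb => Finset.sum_le_sum fun b' hb' => ?_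
        rw [← hn]
        exact le_pairCount A S (ne0 b (hB'B hb)) (fun a ha => hABS a ha b (hB'B hb))
          (fun a ha => hABS a ha b' (hB'B hb'))
  have hEpos : 0 < E := lt_of_lt_of_le (by
    have : 0 < m := by omega
    positivity) hElow
  set A' := {a ∈ A | a + 1 ∉ B'} with hA'
  have hA'c : #A' = n - m := by
    have : #{a ∈ A | a + 1 ∈ B'} = m := by
      rw [← hB'm]
      refine Finset.card_nbij (fun a => a + 1) ?_ ?_ ?_
      · intro a ha; exact (Finset.mem_filter.1 ha).2
      · intro a _ a' _ e; exact add_right_cancel e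
      · intro b hb
        obtain ⟨a, ha, rfl⟩ := Finset.mem_image.1 (hB'B hb)
        exact ⟨a, Finset.mem_coe.2 (Finset.mem_filter.2 ⟨ha, hb⟩), rfl⟩
    have h2 := Finset.card_filter_add_card_filter_not (s := A) (fun a => a + 1 ∈ B')
    rw [this, hn] at h2
    change m + #A' = n at h2
    omega
  have hA'A : A' ⊆ A := Finset.filter_subset _ _
  have hF : ∀ a ∈ A', E ≤ 2 * #B' * ∑ b' ∈ B', pairCount S (a + 1) b' := by
    intro a ha
    rw [Finset.mem_filter] at ha
    -- Off zero `pairCount` is symmetric; its values at zero are irrelevant and may be altered.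
    have := le_of_minimal (fun x y => if x = 0 ∨ y = 0 then 0 else pairCount S x y)
      (by
        intro x y
        by_cases hx : x = 0
        · simp [hx]
        · by_cases hy : y = 0
          · simp [hy]
          · simp [hx, hy, pairCount_comm S hx hy])
      #S B B' (fun x hx => by simp [ne0 x hx, pairCount_self S (ne0 x hx)]) hB'B
      (by
        intro B₁ h1 h2
        have key : ∀ B₂ ⊆ B, ∑ x ∈ B₂, ∑ y ∈ B₂, (if x = 0 ∨ y = 0 then 0 else pairCount S x y) =
            ∑ x ∈ B₂, ∑ y ∈ B₂, pairCount S x y := fun B₂ h =>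
          Finset.sum_congr rfl fun x hx => Finset.sum_congr rfl fun y hy => by
            simp [ne0 x (h hx), ne0 y (h hy)]
        rw [key _ hB'B, key _ h1]
        exact hmin B₁ (Finset.mem_powersetCard.2 ⟨h1, by rw [h2, hB'm]⟩))
      (a + 1) (Finset.mem_image_of_mem _ ha.1) ha.2
    have ha0 := ne0 (a + 1) (Finset.mem_image_of_mem _ ha.1)
    have e1 : ∑ x ∈ B', ∑ y ∈ B', (if x = 0 ∨ y = 0 then 0 else pairCount S x y) = E :=
      Finset.sum_congr rfl fun x hx => Finset.sum_congr rfl fun y hy => by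
        simp [ne0 x (hB'B hx), ne0 y (hB'B hy)]
    have e2 : ∑ y ∈ B', (if a + 1 = 0 ∨ y = 0 then 0 else pairCount S (a + 1) y) =
        ∑ y ∈ B', pairCount S (a + 1) y :=
      Finset.sum_congr rfl fun y hy => by simp [ha0, ne0 y (hB'B hy)]
    rw [e1, e2, hB'm] at this
    rw [hB'm]
    have h3 : 2 * (m * #S) ≤ E := by
      calc 2 * (m * #S) = m * (2 * #S) := by ring
        _ ≤ m * (n * m) := Nat.mul_le_mul_left _ hbig
        _ = m * m * n := by ring
        _ ≤ E := hElow
    have h4 : 2 * m * ∑ b' ∈ B', pairCount S (a + 1) b' =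
      2 * (m * ∑ b' ∈ B', pairCount S (a + 1) b') := by ring
    omega
  have hM : 196 * n ^ 5 ≤ (n ^ 4) ^ 2 := by
    calc 196 * n ^ 5 ≤ n ^ 3 * n ^ 5 := by
          have : 6 ^ 3 ≤ n ^ 3 := Nat.pow_le_pow_left hn6 3
          gcongr
          omega
      _ = _ := by ring
  clear_value E
  set P := {s ∈ S | #A' * #B' ≤ 8 * #S * #{u ∈ A' ×ˢ B' | u.1 * u.2 = s}} with hP
  have hbad : 8 * #{u ∈ A' ×ˢ B' | u.1 * u.2 ∉ P} ≤ #A' * #B' := by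
    refine le_of_mul_le_mul_left ?_ (show 0 < #S by omega)
    have hc : #{u ∈ A' ×ˢ B' | u.1 * u.2 ∉ P} ≤
        ∑ s ∈ S with s ∉ P, #{u ∈ A' ×ˢ B' | u.1 * u.2 = s} := by
      rw [Finset.card_eq_sum_card_fiberwise (f := fun u => u.1 * u.2) (t := S.filter (· ∉ P))]
      · refine Finset.sum_le_sum fun s _ => Finset.card_le_card ?_
        exact Finset.filter_subset_filter _ (Finset.filter_subset _ _)
      · intro u hu
        obtain ⟨h1, h2⟩ := Finset.mem_filter.1 (Finset.mem_coe.1 hu)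
        rw [Finset.mem_product] at h1
        exact Finset.mem_coe.2 (Finset.mem_filter.2
          ⟨hABS _ (hA'A h1.1) _ (hB'B h1.2), h2⟩)
    calc #S * (8 * #{u ∈ A' ×ˢ B' | u.1 * u.2 ∉ P})
        ≤ #S * (8 * ∑ s ∈ S with s ∉ P, #{u ∈ A' ×ˢ B' | u.1 * u.2 = s}) := by gcongr
      _ = ∑ s ∈ S with s ∉ P, 8 * #S * #{u ∈ A' ×ˢ B' | u.1 * u.2 = s} := by
          rw [← Finset.mul_sum]; ring
      _ ≤ ∑ s ∈ S with s ∉ P, #A' * #B' := by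
          refine Finset.sum_le_sum fun s hs => ?_
          obtain ⟨h1, h2⟩ := Finset.mem_filter.1 hs
          by_contra hcon
          exact h2 (Finset.mem_filter.2 ⟨h1, by omega⟩)
      _ ≤ ∑ s ∈ S, #A' * #B' := Finset.sum_le_sum_of_subset (Finset.filter_subset _ _)
      _ = _ := by rw [Finset.sum_const, smul_eq_mul]
  set T := {t ∈ (A' ×ˢ A') ×ˢ B' ×ˢ B' | t.1.1 * t.2.1 ∈ P ∧ t.1.1 * t.2.2 ∈ P ∧
      t.1.2 * t.2.1 ∈ P ∧ t.1.2 * t.2.2 ∈ P} with hT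
  have hA'0 : (0 : F) ∉ A' := fun h => hA (hA'A h)
  have hA'n : #A' ≤ n := by omega
  have hB'n : #B' ≤ n := by omega
  have r1 := le_card_rectangles A' B' P hbad
  have r2 := card_quadruples_le A' B' S P hA'0 hB'0 hS (#A' * #B') (8 * #S)
    (fun s hs => (Finset.mem_filter.1 hs).2)
  have r3 := card_rectangle_collisions_sq_le A' B' hA'0 hB'0 T (Finset.filter_subset _ _) L
    (2 ^ 14 * n ^ 7 * #S ^ 3 / E ^ 2) (1024 * n ^ 2 * #S ^ 2)
    (by omega) (by omega)
    (fun X τ hτ hX => by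
      rw [Nat.le_div_iff_mul_le (by positivity), hE]
      exact card_level_le_left A' B' S X τ n (n ^ 4) hA'0 hB'0 hS hτ hX (by rwa [← hE]) hA'n hB'n
        (by omega) hSn hchar hM)
    (fun X τ hτ hX => by
      refine card_level_le_right B B' S X τ n (n ^ 4) hB0 hB'B hτ hX ?_ hBn (by omega) hnS hchar hM
      intro b hb b' hb'
      obtain ⟨a, ha, rfl⟩ := Finset.mem_image.1 hb
      simpa using hABS a ha b' hb')
  have r4 := card_sq_le_card_image T (fun p =>
    ((p.1.1 * p.2.1, p.1.1 * p.2.2, p.1.2 * p.2.1, p.1.2 * p.2.2) : F × F × F × F))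
    {v ∈ P ×ˢ S ×ˢ S ×ˢ P | v.1 * v.2.2.2 = v.2.1 * v.2.2.1} (by
      intro t ht
      obtain ⟨-, h1, h2, h3, h4⟩ := Finset.mem_filter.1 ht
      simp only [Finset.mem_filter, Finset.mem_product]
      exact ⟨⟨h1, (Finset.mem_filter.1 h2).1, (Finset.mem_filter.1 h3).1, h4⟩, by ring⟩)
  rw [← hE] at r2
  have r5 := Nat.div_mul_le_self (2 ^ 14 * n ^ 7 * #S ^ 3) (E ^ 2)
  generalize 2 ^ 14 * n ^ 7 * #S ^ 3 / E ^ 2 = W at r3 r5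
  generalize #{v ∈ P ×ˢ S ×ˢ S ×ˢ P | v.1 * v.2.2.2 = v.2.1 * v.2.2.1} = I at r2 r4
  generalize #T = t at r1 r4
  have hQ : ∃ Q, Q ^ 2 ≤ (16 * (L * W)) * (16 * (L * (1024 * n ^ 2 * #S ^ 2))) ∧ t ^ 2 ≤ Q * I :=
    ⟨_, r3, r4⟩
  obtain ⟨Q, r3, r4⟩ := hQ
  set q := #A' * #B' with hqd
  have hq' : n ^ 2 ≤ 6 * q := by rw [hqd, hA'c, hB'm]; exact hq
  have s1 : q ^ 6 ≤ 256 * Q * #S ^ 2 * n ^ 2 * E := by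
    calc q ^ 6 = q ^ 2 * (q ^ 2) ^ 2 := by ring
      _ ≤ q ^ 2 * (2 * t) ^ 2 := by gcongr
      _ = 4 * q ^ 2 * t ^ 2 := by ring
      _ ≤ 4 * q ^ 2 * (Q * I) := by gcongr
      _ = 4 * Q * (q ^ 2 * I) := by ring
      _ ≤ 4 * Q * ((8 * #S) ^ 2 * (#A' ^ 2 * E)) := by gcongr
      _ ≤ 4 * Q * ((8 * #S) ^ 2 * (n ^ 2 * E)) := by gcongr
      _ = _ := by ring
  have s2 : q ^ 12 ≤ 2 ^ 48 * L ^ 2 * n ^ 13 * #S ^ 9 := by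
    calc q ^ 12 = (q ^ 6) ^ 2 := by ring
      _ ≤ (256 * Q * #S ^ 2 * n ^ 2 * E) ^ 2 := by gcongr
      _ = 2 ^ 16 * Q ^ 2 * #S ^ 4 * n ^ 4 * E ^ 2 := by ring
      _ ≤ 2 ^ 16 * ((16 * (L * W)) * (16 * (L * (1024 * n ^ 2 * #S ^ 2)))) * #S ^ 4 * n ^ 4 *
          E ^ 2 := by gcongr
      _ = 2 ^ 34 * L ^ 2 * n ^ 6 * #S ^ 6 * (W * E ^ 2) := by ring
      _ ≤ 2 ^ 34 * L ^ 2 * n ^ 6 * #S ^ 6 * (2 ^ 14 * n ^ 7 * #S ^ 3) := by gcongr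
      _ = _ := by ring
  refine le_of_mul_le_mul_left ?_ (show 0 < n ^ 13 by positivity)
  calc n ^ 13 * n ^ 11 = (n ^ 2) ^ 12 := by ring
    _ ≤ (6 * q) ^ 12 := by gcongr
    _ = 6 ^ 12 * q ^ 12 := by ring
    _ ≤ 2 ^ 32 * (2 ^ 48 * L ^ 2 * n ^ 13 * #S ^ 9) := Nat.mul_le_mul (by norm_num) s2
    _ = _ := by ring

end conclusion

/-- **Corollary (first part).** For a finite subset `A` of a field `F` with `|A| ≥ 2`
and `|A| < p^{1/4}` when `char F = p > 0`, we have `|A(A+1)| ≳ |A|^{11/9}`. -/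
theorem shifted_product_lower_bound :
    ∃ c : ℝ, 0 < c ∧ ∃ d : ℝ, 0 ≤ d ∧
      ∀ (F : Type) [Field F] [DecidableEq F] (A : Finset F),
        2 ≤ A.card →
        (∀ p : ℕ, p.Prime → CharP F p → (A.card : ℝ) < (p : ℝ) ^ ((1 : ℝ) / 4)) →
        ((A * A.image (· + 1)).card : ℝ) ≥
          c * Real.log A.card ^ (-d) * (A.card : ℝ) ^ ((11 : ℝ) / 9) := by
  refine ⟨((2 : ℝ) ^ 89)⁻¹ , by positivity, 2 / 9, by norm_num, ?_⟩
  intro F _ _ A hA2 hp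
  set N := #A with hN
  set S := A * A.image (· + 1) with hS
  have hNS : N ^ 11 ≤ 2 ^ 85 * (Nat.log 2 N + 1) ^ 2 * #S ^ 9 := by
    by_cases hN8 : N < 8
    · have hSpos : 0 < #S := by
        rw [Finset.card_pos]
        have hAne : A.Nonempty := Finset.card_pos.1 (by omega)
        exact hAne.mul (hAne.image _)
      calc N ^ 11 ≤ 8 ^ 11 := Nat.pow_le_pow_left hN8.le 11
        _ ≤ 2 ^ 85 * (0 + 1) ^ 2 * 1 ^ 9 := by norm_num
        _ ≤ _ := by gcongr <;> omega
    push Not at hN8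
    set A₀ := A \ {0, -1} with hA₀
    have hc : N ≤ #A₀ + 2 := by
      have h1 := Finset.le_card_sdiff ({0, -1} : Finset F) A
      have h2 : #({0, -1} : Finset F) ≤ 2 := Finset.card_le_two
      rw [← hA₀] at h1
      omega
    have hc' : #A₀ ≤ N := Finset.card_le_card Finset.sdiff_subset
    set n := #A₀ with hn
    have hA₀A : ∀ a ∈ A₀, a ∈ A ∧ a ≠ 0 ∧ a ≠ -1 := by
      intro a ha
      simpa [hA₀] using ha
    set S₀ := A₀ * A₀.image (· + 1) with hS₀
    have hS₀S : #S₀ ≤ #S := by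
      refine Finset.card_le_card (Finset.mul_subset_mul Finset.sdiff_subset
        (Finset.image_subset_image Finset.sdiff_subset))
    have core := shifted_product_core A₀ S₀ n hn.symm (by omega) (by simp [hA₀]) (by simp [hA₀])
      (by
        intro h
        obtain ⟨a, ha, b, hb, e⟩ := Finset.mem_mul.1 h
        obtain ⟨a', ha', rfl⟩ := Finset.mem_image.1 hb
        rcases mul_eq_zero.1 e with e | e
        · exact (hA₀A a ha).2.1 e
        · exact (hA₀A a' ha').2.2 (eq_neg_of_add_eq_zero_left e))
      (fun a ha a' ha' => Finset.mul_mem_mul ha (Finset.mem_image_of_mem _ ha'))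
      (by
        refine Finset.card_mul_le.trans ?_
        rw [sq]
        exact Nat.mul_le_mul_left _ Finset.card_image_le)
      (by
        intro j hj0 hj hjF
        obtain ⟨p, hpF⟩ := CharP.exists F
        have hdvd := (CharP.cast_eq_zero_iff F p j).1 hjF
        rcases CharP.char_is_prime_or_zero F p with hpp | rfl
        · have h1 := hp p hpp hpF
          have h2 : ((N : ℝ)) ^ 4 < p := by
            calc ((N : ℝ)) ^ 4 < ((p : ℝ) ^ ((1 : ℝ) / 4)) ^ 4 :=
                  pow_lt_pow_left₀ h1 (by positivity) (by norm_num)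
              _ = p := by
                rw [← Real.rpow_natCast, ← Real.rpow_mul (by positivity)]
                norm_num
          have h3 : N ^ 4 < p := by exact_mod_cast h2
          have h4 := Nat.le_of_dvd hj0 hdvd
          have h5 := Nat.pow_le_pow_left hc' 4
          omega
        · rw [zero_dvd_iff] at hdvd
          omega)
    have h34 : 3 * N ≤ 4 * n := by omega
    have h5 : 3 ^ 11 * N ^ 11 ≤ 3 ^ 11 * (2 ^ 85 * (Nat.log 2 N + 1) ^ 2 * #S ^ 9) := by
      calc 3 ^ 11 * N ^ 11 = (3 * N) ^ 11 := by ring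
        _ ≤ (4 * n) ^ 11 := by gcongr
        _ = 4 ^ 11 * n ^ 11 := by ring
        _ ≤ 4 ^ 11 * (2 ^ 80 * (Nat.log 2 n + 1) ^ 2 * #S₀ ^ 9) := by gcongr
        _ ≤ 4 ^ 11 * (2 ^ 80 * (Nat.log 2 N + 1) ^ 2 * #S ^ 9) := by
            have := Nat.log_mono_right (b := 2) hc'
            gcongr
        _ = (4 ^ 11 * 2 ^ 80) * ((Nat.log 2 N + 1) ^ 2 * #S ^ 9) := by ring
        _ ≤ (3 ^ 11 * 2 ^ 85) * ((Nat.log 2 N + 1) ^ 2 * #S ^ 9) :=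
            Nat.mul_le_mul_right _ (by norm_num)
        _ = _ := by ring
    exact le_of_mul_le_mul_left h5 (by norm_num)
  have hlog2 := Real.log_two_gt_d9
  have hlogN : Real.log 2 ≤ Real.log N :=
    Real.log_le_log (by norm_num) (by exact_mod_cast hA2)
  have hlogpos : 0 < Real.log N := by linarith
  have hL : ((Nat.log 2 N + 1 : ℕ) : ℝ) ≤ 3 * Real.log N := by
    have h1 : (Nat.log 2 N : ℝ) * Real.log 2 ≤ Real.log N := by
      rw [← Real.log_pow]
      refine Real.log_le_log (by positivity) ?_
      exact_mod_cast Nat.pow_log_le_self 2 (by omega)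
    push_cast
    nlinarith
  have hreal : (N : ℝ) ^ 11 ≤ 2 ^ 89 * Real.log N ^ 2 * (#S : ℝ) ^ 9 := by
    have h1 : (N : ℝ) ^ 11 ≤ 2 ^ 85 * ((Nat.log 2 N + 1 : ℕ) : ℝ) ^ 2 * (#S : ℝ) ^ 9 := by
      exact_mod_cast hNS
    calc (N : ℝ) ^ 11 ≤ 2 ^ 85 * ((Nat.log 2 N + 1 : ℕ) : ℝ) ^ 2 * (#S : ℝ) ^ 9 := h1
      _ ≤ 2 ^ 85 * (3 * Real.log N) ^ 2 * (#S : ℝ) ^ 9 := by gcongr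
      _ = 2 ^ 85 * 9 * (Real.log N ^ 2 * (#S : ℝ) ^ 9) := by ring
      _ ≤ 2 ^ 89 * (Real.log N ^ 2 * (#S : ℝ) ^ 9) := by gcongr; norm_num
      _ = _ := by ring
  -- Both sides are compared through their ninth powers.
  refine le_of_pow_le_pow_left₀ (n := 9) (by norm_num) (by positivity) ?_
  have e1 : ((N : ℝ) ^ ((11 : ℝ) / 9)) ^ 9 = (N : ℝ) ^ 11 := by
    rw [← Real.rpow_natCast, ← Real.rpow_mul (by positivity), ← Real.rpow_natCast]
    norm_num
  have e2 : (Real.log N ^ (-(2 / 9 : ℝ))) ^ 9 = (Real.log N ^ 2)⁻¹ := by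
    rw [← Real.rpow_natCast, ← Real.rpow_mul hlogpos.le, ← Real.rpow_natCast,
      ← Real.rpow_neg hlogpos.le]
    norm_num
  rw [mul_pow, mul_pow, e1, e2]
  calc (((2 : ℝ) ^ 89)⁻¹) ^ 9 * (Real.log N ^ 2)⁻¹ * (N : ℝ) ^ 11
      ≤ ((2 : ℝ) ^ 89)⁻¹ * (Real.log N ^ 2)⁻¹ * (N : ℝ) ^ 11 := by
        gcongr
        exact pow_le_of_le_one (by positivity) (inv_le_one_of_one_le₀ (by norm_num)) (by norm_num)
    _ ≤ ((2 : ℝ) ^ 89)⁻¹ * (Real.log N ^ 2)⁻¹ * (2 ^ 89 * Real.log N ^ 2 * (#S : ℝ) ^ 9) := by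
        gcongr
    _ = _ := by field_simp
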